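/- Suppose M > 1, c > 1 (c not an integer), γ > 0, and let 𝒜(M; c, γ) denote the number of quadruples of integers (n₁, n₂, n₃, n₄) with M < n₁, n₂, n₃, n₄ ≤ 2M and |n₁^c + n₂^c − n₃^c − n₄^c| < γ. Then for every fixed η > 0, 𝒜(M; c, γ) ≪ (γ·M^{4−c} + M²)·M^η, where the implied constant depends only on c and η. -/

import Mathlib

/-!
After division by `M ^ c` one has to bound the `δ`-approximate additive energy of the numbers
`(n / M) ^ c`, `n ≍ M`, with `δ = γ / M ^ c`. It is controlled by the mean over `0 ≤ x ≤ T ≍ 1 / δ`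
of the fourth power of the exponential sum `∑ e(x (n / M) ^ c)`. For `x ≍ T`, Poisson summation and
stationary phase (van der Corput's process B) turn this sum into `M / √T` times an exponential sum
of length `T / M` whose phases are, up to a constant, `l ^ (c / (c - 1))`; its fourth moment is in
turn governed by an additive energy for the exponent `c / (c - 1)`.

Hence an energy bound `M ^ β + M ^ 4 δ` for the exponent `c / (c - 1)` implies the bound
`M ^ (4 - β / (β - 1)) + M ^ 4 δ` for `c`: when `T` exceeds `M ^ (β / (β - 1))`, one uses
monotonicity in `δ` instead. Since `c ↦ c / (c - 1)` is an involution of `(1, ∞)`, this can be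
iterated. The exponent `β = 3` is trivial, and `β ↦ 4 - β / (β - 1)` sends `2 + 1 / k` to
`2 + 1 / (k + 1)`, so every exponent larger than `2` is reached.
-/

namespace RobertSargos

section VanDerCorput

open Real Set MeasureTheory intervalIntegral
open scoped FourierTransform

lemma hasDerivAt_fourierChar_comp {F : ℝ → ℝ} {F' u : ℝ} (hF : HasDerivAt F F' u) :
    HasDerivAt (fun u ↦ (𝐞 (F u) : ℂ)) (2 * π * Complex.I * F' * 𝐞 (F u)) u := by
  refine ((Real.hasDerivAt_fourierChar (F u)).scomp u hF).congr_deriv ?_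
  rw [Complex.real_smul]
  ring

lemma continuous_coe_fourierChar : Continuous fun x : ℝ ↦ (𝐞 x : ℂ) :=
  continuous_subtype_val.comp Real.continuous_fourierChar

lemma integral_mul_deriv_mul_fourierChar {a b : ℝ} {F F' q q' : ℝ → ℝ}
    (hF : ∀ u ∈ uIcc a b, HasDerivAt F (F' u) u) (hF' : ContinuousOn F' (uIcc a b))
    (hq : ∀ u ∈ uIcc a b, HasDerivAt q (q' u) u) (hq' : ContinuousOn q' (uIcc a b)) :
    ∫ u in a..b, ((q u * F' u : ℝ) : ℂ) * 𝐞 (F u) =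
      (2 * π * Complex.I)⁻¹ *
        (q b * 𝐞 (F b) - q a * 𝐞 (F a) - ∫ u in a..b, (q' u : ℂ) * 𝐞 (F u)) := by
  have hFc : ContinuousOn F (uIcc a b) := HasDerivAt.continuousOn hF
  have hec : ContinuousOn (fun u ↦ (𝐞 (F u) : ℂ)) (uIcc a b) :=
    continuous_coe_fourierChar.comp_continuousOn hFc
  have hF'c : ContinuousOn (fun u ↦ (F' u : ℂ)) (uIcc a b) :=
    Complex.continuous_ofReal.comp_continuousOn hF'
  rw [← integral_mul_deriv_eq_deriv_mul (fun u hu ↦ (hq u hu).ofReal_comp)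
    (fun u hu ↦ hasDerivAt_fourierChar_comp (hF u hu))
    (Complex.continuous_ofReal.comp_continuousOn hq').intervalIntegrable
    ((continuousOn_const.mul hF'c).mul hec).intervalIntegrable,
    ← intervalIntegral.integral_const_mul]
  congr with u
  push_cast
  field_simp [Complex.two_pi_I_ne_zero]

lemma norm_integral_deriv_mul_fourierChar_le_of_deriv_nonpos {a b : ℝ} {q q' : ℝ → ℝ} (F : ℝ → ℝ)
    (hab : a ≤ b) (hq : ∀ u ∈ Icc a b, HasDerivAt q (q' u) u) (hq' : ContinuousOn q' (Icc a b))
    (hq'0 : ∀ u ∈ Icc a b, q' u ≤ 0) : ‖∫ u in a..b, (q' u : ℂ) * 𝐞 (F u)‖ ≤ q a - q b := by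
  rw [← uIcc_of_le hab] at hq hq'
  calc _ ≤ ∫ u in a..b, -q' u := by
        refine norm_integral_le_of_norm_le hab (ae_of_all _ fun u hu ↦ ?_)
          hq'.neg.intervalIntegrable
        rw [norm_mul, Circle.norm_coe, mul_one, Complex.norm_real, Real.norm_eq_abs,
          abs_of_nonpos (hq'0 u (Ioc_subset_Icc_self hu))]
    _ = q a - q b := by
        rw [intervalIntegral.integral_neg, integral_eq_sub_of_hasDerivAt hq hq'.intervalIntegrable,
          neg_sub]

lemma norm_integral_fourierChar_le_of_le_deriv {a b l : ℝ} {F F' F'' : ℝ → ℝ} (hab : a ≤ b)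
    (hl : 0 < l) (hF : ∀ u ∈ Icc a b, HasDerivAt F (F' u) u)
    (hF' : ∀ u ∈ Icc a b, HasDerivAt F' (F'' u) u) (hF'' : ContinuousOn F'' (Icc a b))
    (hF''0 : ∀ u ∈ Icc a b, 0 ≤ F'' u) (hlF : ∀ u ∈ Icc a b, l ≤ F' u) :
    ‖∫ u in a..b, (𝐞 (F u) : ℂ)‖ ≤ 1 / l := by
  have hpos : ∀ u ∈ Icc a b, 0 < F' u := fun u hu ↦ hl.trans_le (hlF u hu)
  have hF'c : ContinuousOn F' (Icc a b) := HasDerivAt.continuousOn hF'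
  have hq : ∀ u ∈ Icc a b, HasDerivAt (fun u ↦ (F' u)⁻¹) (-F'' u / F' u ^ 2) u :=
    fun u hu ↦ (hF' u hu).fun_inv (hpos u hu).ne'
  have hqc : ContinuousOn (fun u ↦ -F'' u / F' u ^ 2) (Icc a b) :=
    hF''.neg.div (hF'c.pow 2) fun u hu ↦ (pow_pos (hpos u hu) 2).ne'
  have hvar : ‖∫ u in a..b, ((-F'' u / F' u ^ 2 : ℝ) : ℂ) * 𝐞 (F u)‖ ≤ (F' a)⁻¹ - (F' b)⁻¹ :=
    norm_integral_deriv_mul_fourierChar_le_of_deriv_nonpos F hab hq hqc fun u hu ↦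
      div_nonpos_of_nonpos_of_nonneg (neg_nonpos.mpr (hF''0 u hu)) (sq_nonneg _)
  have hibp : ∫ u in a..b, (𝐞 (F u) : ℂ) = ∫ u in a..b, (((F' u)⁻¹ * F' u : ℝ) : ℂ) * 𝐞 (F u) := by
    refine integral_congr fun u hu ↦ ?_
    rw [uIcc_of_le hab] at hu
    simp only [inv_mul_cancel₀ (hpos u hu).ne', Complex.ofReal_one, one_mul]
  have hends : ∀ u ∈ Icc a b, ‖(((F' u)⁻¹ : ℝ) : ℂ) * 𝐞 (F u)‖ = (F' u)⁻¹ := fun u hu ↦ by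
    rw [norm_mul, Circle.norm_coe, mul_one, Complex.norm_real, Real.norm_eq_abs,
      abs_of_pos (inv_pos.mpr (hpos u hu))]
  rw [← uIcc_of_le hab] at hF hq hqc hF'c
  rw [hibp, integral_mul_deriv_mul_fourierChar hF hF'c hq hqc, norm_mul, norm_inv]
  have h2π : ‖(2 * π * Complex.I : ℂ)‖ = 2 * π := by simp [abs_of_pos pi_pos]
  have ha := hends a (left_mem_Icc.mpr hab)
  have hb := hends b (right_mem_Icc.mpr hab)
  rw [h2π, inv_mul_le_iff₀ two_pi_pos]
  calc _ ≤ (F' b)⁻¹ + (F' a)⁻¹ + ((F' a)⁻¹ - (F' b)⁻¹) := by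
        refine (norm_sub_le _ _).trans (add_le_add ((norm_sub_le _ _).trans ?_) hvar)
        rw [ha, hb]
    _ = 2 * (F' a)⁻¹ := by ring
    _ ≤ 2 * π * (1 / l) := by
        have := inv_anti₀ hl (hlF a (left_mem_Icc.mpr hab))
        rw [one_div]
        have := inv_pos.mpr hl
        nlinarith [Real.pi_gt_three]

lemma norm_integral_fourierChar_le_of_deriv_le {a b l : ℝ} {F F' F'' : ℝ → ℝ} (hab : a ≤ b)
    (hl : 0 < l) (hF : ∀ u ∈ Icc a b, HasDerivAt F (F' u) u)
    (hF' : ∀ u ∈ Icc a b, HasDerivAt F' (F'' u) u) (hF'' : ContinuousOn F'' (Icc a b))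
    (hF''0 : ∀ u ∈ Icc a b, 0 ≤ F'' u) (hlF : ∀ u ∈ Icc a b, F' u ≤ -l) :
    ‖∫ u in a..b, (𝐞 (F u) : ℂ)‖ ≤ 1 / l := by
  have hneg : ∀ u ∈ Icc (-b) (-a), -u ∈ Icc a b := fun u hu ↦
    ⟨le_neg_of_le_neg hu.2, neg_le_of_neg_le hu.1⟩
  have h := norm_integral_fourierChar_le_of_le_deriv (F := fun u ↦ F (-u))
    (F' := fun u ↦ -F' (-u)) (F'' := fun u ↦ F'' (-u)) (neg_le_neg hab) hl
    (fun u hu ↦ by simpa [Function.comp_def] using (hF _ (hneg u hu)).comp u (hasDerivAt_neg u))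
    (fun u hu ↦ by
      simpa [Function.comp_def] using ((hF' _ (hneg u hu)).comp u (hasDerivAt_neg u)).fun_neg)
    (hF''.comp continuousOn_neg hneg) (fun u hu ↦ hF''0 _ (hneg u hu))
    (fun u hu ↦ le_neg_of_le_neg (hlF _ (hneg u hu)))
  rwa [integral_comp_neg fun u ↦ (𝐞 (F u) : ℂ), neg_neg, neg_neg] at h

lemma exists_forall_mul_sub_le_of_le_deriv {a b l : ℝ} {f f' : ℝ → ℝ} (hab : a ≤ b)
    (hf : ∀ u ∈ Icc a b, HasDerivAt f (f' u) u) (hlf : ∀ u ∈ Icc a b, l ≤ f' u) :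
    ∃ z ∈ Icc a b, (∀ u ∈ Ioc z b, l * (u - z) ≤ f u) ∧ ∀ u ∈ Ico a z, f u ≤ -(l * (z - u)) := by
  have hfc : ContinuousOn f (Icc a b) := HasDerivAt.continuousOn hf
  have hslope : ∀ u ∈ Icc a b, ∀ v ∈ Icc a b, u ≤ v → l * (v - u) ≤ f v - f u := by
    refine (convex_Icc a b).mul_sub_le_image_sub_of_le_deriv hfc
      (fun u hu ↦ (hf u (interior_subset hu)).differentiableAt.differentiableWithinAt)
      fun u hu ↦ ?_
    rw [(hf u (interior_subset hu)).deriv]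
    exact hlf u (interior_subset hu)
  have haI := left_mem_Icc.mpr hab
  have hbI := right_mem_Icc.mpr hab
  rcases le_total 0 (f a) with ha | ha
  · exact ⟨a, haI, fun u hu ↦ by linarith [hslope a haI u (Ioc_subset_Icc_self hu) hu.1.le],
      fun u hu ↦ absurd hu.2 hu.1.not_gt⟩
  rcases le_total (f b) 0 with hb | hb
  · exact ⟨b, hbI, fun u hu ↦ absurd hu.1 hu.2.not_gt,
      fun u hu ↦ by linarith [hslope u (Ico_subset_Icc_self hu) b hbI hu.2.le]⟩
  · obtain ⟨z, hz, hz0⟩ := intermediate_value_Icc hab hfc ⟨ha, hb⟩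
    exact ⟨z, hz, fun u hu ↦ by linarith [hslope z hz u ⟨hz.1.trans hu.1.le, hu.2⟩ hu.1.le],
      fun u hu ↦ by linarith [hslope u ⟨hu.1, hu.2.le.trans hz.2⟩ z hz hu.2.le]⟩

lemma norm_integral_fourierChar_le_of_mul_sub_le_deriv {a b l : ℝ} {F F' F'' : ℝ → ℝ}
    (hab : a ≤ b) (hl : 0 < l) (hF : ∀ u ∈ Icc a b, HasDerivAt F (F' u) u)
    (hF' : ∀ u ∈ Icc a b, HasDerivAt F' (F'' u) u) (hF'' : ContinuousOn F'' (Icc a b))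
    (hF''0 : ∀ u ∈ Icc a b, 0 ≤ F'' u) (hlF : ∀ u ∈ Ioc a b, l * (u - a) ≤ F' u) :
    ‖∫ u in a..b, (𝐞 (F u) : ℂ)‖ ≤ 2 / √l := by
  have hs : 0 < √l := Real.sqrt_pos.mpr hl
  have hd : 0 < 1 / √l := by positivity
  have hld : l * (1 / √l) = √l := by rw [mul_one_div, Real.div_sqrt]
  have hconst : ∀ p, a ≤ p → ‖∫ u in a..p, (𝐞 (F u) : ℂ)‖ ≤ p - a := fun p hap ↦ by
    refine (norm_integral_le_of_norm_le_const (C := 1) fun u _ ↦ (Circle.norm_coe _).le).trans ?_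
    rw [one_mul, abs_of_nonneg (sub_nonneg.mpr hap)]
  rcases le_total b (a + 1 / √l) with h | h
  · calc _ ≤ b - a := hconst b hab
      _ ≤ 1 / √l + 1 / √l := by linarith
      _ = 2 / √l := by ring
  · set p := a + 1 / √l
    have hap : a < p := by simp only [p]; linarith
    have hsub : Icc p b ⊆ Icc a b := Icc_subset_Icc_left hap.le
    have hfar : ‖∫ u in p..b, (𝐞 (F u) : ℂ)‖ ≤ 1 / √l :=
      norm_integral_fourierChar_le_of_le_deriv h hs (fun u hu ↦ hF u (hsub hu))
        (fun u hu ↦ hF' u (hsub hu)) (hF''.mono hsub) (fun u hu ↦ hF''0 u (hsub hu))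
        fun u hu ↦ (by nlinarith [hu.1] : √l ≤ l * (u - a)).trans
          (hlF u ⟨hap.trans_le hu.1, hu.2⟩)
    have hec : ContinuousOn (fun u ↦ (𝐞 (F u) : ℂ)) (Icc a b) :=
      continuous_coe_fourierChar.comp_continuousOn
        (HasDerivAt.continuousOn hF)
    rw [← integral_add_adjacent_intervals
      ((hec.mono (Icc_subset_Icc_right h)).intervalIntegrable_of_Icc hap.le)
      ((hec.mono hsub).intervalIntegrable_of_Icc h)]
    calc _ ≤ (p - a) + 1 / √l := (norm_add_le _ _).trans (add_le_add (hconst p hap.le) hfar)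
      _ = 2 / √l := by ring

lemma norm_integral_fourierChar_le_of_deriv_le_mul_sub {a b l : ℝ} {F F' F'' : ℝ → ℝ}
    (hab : a ≤ b) (hl : 0 < l) (hF : ∀ u ∈ Icc a b, HasDerivAt F (F' u) u)
    (hF' : ∀ u ∈ Icc a b, HasDerivAt F' (F'' u) u) (hF'' : ContinuousOn F'' (Icc a b))
    (hF''0 : ∀ u ∈ Icc a b, 0 ≤ F'' u) (hlF : ∀ u ∈ Ico a b, F' u ≤ -(l * (b - u))) :
    ‖∫ u in a..b, (𝐞 (F u) : ℂ)‖ ≤ 2 / √l := by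
  have hneg : ∀ u ∈ Icc (-b) (-a), -u ∈ Icc a b := fun u hu ↦
    ⟨le_neg_of_le_neg hu.2, neg_le_of_neg_le hu.1⟩
  have h := norm_integral_fourierChar_le_of_mul_sub_le_deriv (F := fun u ↦ F (-u))
    (F' := fun u ↦ -F' (-u)) (F'' := fun u ↦ F'' (-u)) (neg_le_neg hab) hl
    (fun u hu ↦ by simpa [Function.comp_def] using (hF _ (hneg u hu)).comp u (hasDerivAt_neg u))
    (fun u hu ↦ by
      simpa [Function.comp_def] using ((hF' _ (hneg u hu)).comp u (hasDerivAt_neg u)).fun_neg)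
    (hF''.comp continuousOn_neg hneg) (fun u hu ↦ hF''0 _ (hneg u hu))
    (fun u hu ↦ by linarith [hlF (-u) ⟨le_neg_of_le_neg hu.2, neg_lt_of_neg_lt hu.1⟩])
  rwa [integral_comp_neg fun u ↦ (𝐞 (F u) : ℂ), neg_neg, neg_neg] at h

lemma norm_integral_fourierChar_le_of_le_deriv2 {a b l : ℝ} {F F' F'' : ℝ → ℝ} (hab : a ≤ b)
    (hl : 0 < l) (hF : ∀ u ∈ Icc a b, HasDerivAt F (F' u) u)
    (hF' : ∀ u ∈ Icc a b, HasDerivAt F' (F'' u) u) (hF'' : ContinuousOn F'' (Icc a b))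
    (hlF : ∀ u ∈ Icc a b, l ≤ F'' u) :
    ‖∫ u in a..b, (𝐞 (F u) : ℂ)‖ ≤ 4 / √l := by
  obtain ⟨z, ⟨haz, hzb⟩, hright, hleft⟩ := exists_forall_mul_sub_le_of_le_deriv hab hF' hlF
  have hsubl : Icc a z ⊆ Icc a b := Icc_subset_Icc_right hzb
  have hsubr : Icc z b ⊆ Icc a b := Icc_subset_Icc_left haz
  have hIl : ‖∫ u in a..z, (𝐞 (F u) : ℂ)‖ ≤ 2 / √l :=
    norm_integral_fourierChar_le_of_deriv_le_mul_sub haz hl (fun u hu ↦ hF u (hsubl hu))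
      (fun u hu ↦ hF' u (hsubl hu)) (hF''.mono hsubl) (fun u hu ↦ hl.le.trans (hlF u (hsubl hu)))
      hleft
  have hIr : ‖∫ u in z..b, (𝐞 (F u) : ℂ)‖ ≤ 2 / √l :=
    norm_integral_fourierChar_le_of_mul_sub_le_deriv hzb hl (fun u hu ↦ hF u (hsubr hu))
      (fun u hu ↦ hF' u (hsubr hu)) (hF''.mono hsubr) (fun u hu ↦ hl.le.trans (hlF u (hsubr hu)))
      hright
  have hec : ContinuousOn (fun u ↦ (𝐞 (F u) : ℂ)) (Icc a b) :=
    continuous_coe_fourierChar.comp_continuousOn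
      (HasDerivAt.continuousOn hF)
  rw [← integral_add_adjacent_intervals ((hec.mono hsubl).intervalIntegrable_of_Icc haz)
    ((hec.mono hsubr).intervalIntegrable_of_Icc hzb)]
  calc _ ≤ 2 / √l + 2 / √l := (norm_add_le _ _).trans (add_le_add hIl hIr)
    _ = 4 / √l := by ring

lemma norm_integral_mul_le_of_forall_norm_integral_le {a b G K : ℝ} {f : ℝ → ℂ} {g g' : ℝ → ℝ}
    (hab : a ≤ b) (hf : Continuous f) (hg : ∀ u ∈ Icc a b, HasDerivAt g (g' u) u)
    (hg' : ContinuousOn g' (Icc a b)) (hgb : g b = 0) (hG : ∀ u ∈ Icc a b, |g' u| ≤ G)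
    (hK : ∀ u ∈ Icc a b, ‖∫ v in a..u, f v‖ ≤ K) :
    ‖∫ u in a..b, (g u : ℂ) * f u‖ ≤ G * K * (b - a) := by
  rw [← uIcc_of_le hab] at hg hg'
  rw [integral_mul_deriv_eq_deriv_mul (fun u hu ↦ (hg u hu).ofReal_comp)
    (fun u _ ↦ integral_hasDerivAt_right (hf.intervalIntegrable a u)
      hf.stronglyMeasurable.stronglyMeasurableAtFilter hf.continuousAt)
    (Complex.continuous_ofReal.comp_continuousOn hg').intervalIntegrable
    (hf.intervalIntegrable a b), hgb, integral_same, Complex.ofReal_zero, zero_mul, mul_zero,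
    sub_zero, zero_sub, norm_neg, ← abs_of_nonneg (sub_nonneg.mpr hab)]
  refine norm_integral_le_of_norm_le_const fun u hu ↦ ?_
  rw [uIoc_of_le hab] at hu
  have hu' := Ioc_subset_Icc_self hu
  rw [norm_mul, Complex.norm_real, Real.norm_eq_abs]
  exact mul_le_mul (hG u hu') (hK u hu') (norm_nonneg _) ((abs_nonneg _).trans (hG u hu'))

end VanDerCorput

section ApproximateEnergy

open Real Set MeasureTheory
open scoped FourierTransform

variable {ι : Type*} {s t : Finset ι} {A ω : ι → ℝ}

/-- The difference `ω i + ω j - ω k - ω l` of the two sums formed from a quadruple of indices. -/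
def gap (ω : ι → ℝ) (q : ι × ι × ι × ι) : ℝ := ω q.1 + ω q.2.1 - ω q.2.2.1 - ω q.2.2.2

/-- The `δ`-approximate additive energy of a family of reals indexed by `s`: the number of
quadruples whose two sums differ by at most `δ`. -/
noncomputable def approxEnergy (ω : ι → ℝ) (s : Finset ι) (δ : ℝ) : ℕ :=
  {q ∈ s ×ˢ s ×ˢ s ×ˢ s | |gap ω q| ≤ δ}.card

lemma approxEnergy_mono (hst : s ⊆ t) {δ δ' : ℝ} (hδ : δ ≤ δ') :
    approxEnergy ω s δ ≤ approxEnergy ω t δ' :=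
  Finset.card_le_card fun q hq ↦ by
    simp only [Finset.mem_filter, Finset.mem_product] at hq ⊢
    exact ⟨⟨hst hq.1.1, hst hq.1.2.1, hst hq.1.2.2.1, hst hq.1.2.2.2⟩, hq.2.trans hδ⟩

lemma approxEnergy_le_card_pow_four (ω : ι → ℝ) (s : Finset ι) (δ : ℝ) :
    approxEnergy ω s δ ≤ s.card ^ 4 :=
  (Finset.card_filter_le _ _).trans_eq (by simp only [Finset.card_product]; ring)

/-- The exponential sum with coefficients `A` and frequencies `ω`. -/
noncomputable def expSum (s : Finset ι) (A ω : ι → ℝ) (x : ℝ) : ℂ :=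
  ∑ i ∈ s, (A i : ℂ) * 𝐞 (x * ω i)

lemma continuous_expSum : Continuous (expSum s A ω) :=
  continuous_finsetSum _ fun _ _ ↦
    continuous_const.mul (continuous_coe_fourierChar.comp (continuous_id.mul continuous_const))

lemma norm_expSum_le (s : Finset ι) (A ω : ι → ℝ) (x : ℝ) : ‖expSum s A ω x‖ ≤ ∑ i ∈ s, |A i| :=
  (norm_sum_le _ _).trans_eq (Finset.sum_congr rfl fun i _ ↦ by
    rw [norm_mul, Complex.norm_real, Circle.norm_coe, mul_one, Real.norm_eq_abs])

lemma conj_expSum (s : Finset ι) (A ω : ι → ℝ) (x : ℝ) :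
    (starRingEnd ℂ) (expSum s A ω x) = expSum s A ω (-x) := by
  rw [expSum, expSum, map_sum]
  refine Finset.sum_congr rfl fun i _ ↦ ?_
  rw [map_mul, Complex.conj_ofReal, neg_mul, AddChar.map_neg_eq_inv, Circle.coe_inv_eq_conj]

lemma norm_expSum_neg (s : Finset ι) (A ω : ι → ℝ) (x : ℝ) :
    ‖expSum s A ω (-x)‖ = ‖expSum s A ω x‖ := by
  rw [← conj_expSum, Complex.norm_conj]

lemma ofReal_norm_expSum_pow_four (s : Finset ι) (A ω : ι → ℝ) (x : ℝ) :
    ((‖expSum s A ω x‖ ^ 4 : ℝ) : ℂ) = ∑ q ∈ s ×ˢ s ×ˢ s ×ˢ s,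
      ((A q.1 * A q.2.1 * A q.2.2.1 * A q.2.2.2 : ℝ) : ℂ) * 𝐞 (x * gap ω q) := by
  have hterm : ∀ q : ι × ι × ι × ι,
      ((A q.1 * A q.2.1 * A q.2.2.1 * A q.2.2.2 : ℝ) : ℂ) * 𝐞 (x * gap ω q) =
        A q.1 * 𝐞 (x * ω q.1) * (A q.2.1 * 𝐞 (x * ω q.2.1) *
          (A q.2.2.1 * 𝐞 (-x * ω q.2.2.1) * (A q.2.2.2 * 𝐞 (-x * ω q.2.2.2)))) := fun q ↦ by
    have hphase : x * gap ω q = x * ω q.1 + (x * ω q.2.1 + (-x * ω q.2.2.1 + -x * ω q.2.2.2)) := by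
      rw [gap]; ring
    rw [hphase]
    simp only [AddChar.map_add_eq_mul, Circle.coe_mul]
    push_cast
    ring
  simp only [hterm]
  rw [Finset.sum_product]
  simp only [Finset.sum_product, ← Finset.mul_sum, ← Finset.sum_mul]
  rw [← expSum, ← expSum, ← conj_expSum, Complex.ofReal_pow]
  linear_combination (-(‖expSum s A ω x‖ : ℂ) ^ 2 -
    expSum s A ω x * (starRingEnd ℂ) (expSum s A ω x)) * Complex.mul_conj' (expSum s A ω x)

lemma norm_expSum_pow_four (s : Finset ι) (A ω : ι → ℝ) (x : ℝ) :
    ‖expSum s A ω x‖ ^ 4 = ∑ q ∈ s ×ˢ s ×ˢ s ×ˢ s,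
      A q.1 * A q.2.1 * A q.2.2.1 * A q.2.2.2 * cos (2 * π * (x * gap ω q)) := by
  have h := congrArg Complex.re (ofReal_norm_expSum_pow_four s A ω x)
  simpa only [Complex.ofReal_re, Complex.re_sum, Complex.re_ofReal_mul, Real.fourierChar_apply,
    Complex.exp_ofReal_mul_I_re] using h

lemma integral_integral_cos_sub (θ T : ℝ) :
    ∫ x in 0..T, ∫ y in 0..T, cos (θ * (x - y)) =
      (∫ x in 0..T, cos (θ * x)) ^ 2 + (∫ x in 0..T, sin (θ * x)) ^ 2 := by
  have hfi : ∀ {f : ℝ → ℝ}, Continuous f → IntervalIntegrable f volume 0 T :=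
    fun hf ↦ hf.intervalIntegrable _ _
  have hinner : ∀ x, ∫ y in 0..T, cos (θ * (x - y)) =
      cos (θ * x) * (∫ y in 0..T, cos (θ * y)) + sin (θ * x) * ∫ y in 0..T, sin (θ * y) := by
    intro x
    simp only [mul_sub, cos_sub]
    rw [intervalIntegral.integral_add (hfi (by fun_prop)) (hfi (by fun_prop)),
      intervalIntegral.integral_const_mul, intervalIntegral.integral_const_mul]
  simp only [hinner]
  rw [intervalIntegral.integral_add (hfi (by fun_prop)) (hfi (by fun_prop)),
    intervalIntegral.integral_mul_const, intervalIntegral.integral_mul_const, sq, sq]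

lemma sq_div_two_le_integral_integral_cos {g T : ℝ} (hT : 0 < T) (hg : |g| ≤ 1 / (8 * T)) :
    T ^ 2 / 2 ≤ ∫ x in 0..T, ∫ y in 0..T, cos (2 * π * g * (x - y)) := by
  have hcos : ∀ x ∈ Icc 0 T, √2 / 2 ≤ cos (2 * π * g * x) := fun x hx ↦ by
    rw [← cos_pi_div_four, ← cos_abs (2 * π * g * x)]
    refine cos_le_cos_of_nonneg_of_le_pi (abs_nonneg _) (by linarith [pi_pos]) ?_
    rw [abs_mul, abs_mul, abs_of_pos two_pi_pos, abs_of_nonneg hx.1]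
    calc 2 * π * |g| * x ≤ 2 * π * (1 / (8 * T)) * T := by gcongr; exacts [hx.1, hx.2]
      _ = π / 4 := by field
  have hle : T * (√2 / 2) ≤ ∫ x in 0..T, cos (2 * π * g * x) := by
    have hconst := intervalIntegral.integral_mono_on (μ := volume) hT.le intervalIntegrable_const
      (Continuous.intervalIntegrable (by fun_prop) _ _) hcos
    rwa [intervalIntegral.integral_const, sub_zero, smul_eq_mul] at hconst
  rw [integral_integral_cos_sub]
  calc T ^ 2 / 2 = (T * (√2 / 2)) ^ 2 := by rw [mul_pow, div_pow, sq_sqrt two_pos.le]; ring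
    _ ≤ (∫ x in 0..T, cos (2 * π * g * x)) ^ 2 := by gcongr
    _ ≤ _ := le_add_of_nonneg_right (sq_nonneg _)

lemma integral_integral_norm_expSum_sub_pow_four (s : Finset ι) (A ω : ι → ℝ) (T : ℝ) :
    ∫ x in 0..T, ∫ y in 0..T, ‖expSum s A ω (x - y)‖ ^ 4 =
      ∑ q ∈ s ×ˢ s ×ˢ s ×ˢ s, A q.1 * A q.2.1 * A q.2.2.1 * A q.2.2.2 *
        ∫ x in 0..T, ∫ y in 0..T, cos (2 * π * gap ω q * (x - y)) := by
  have hphase : ∀ (q : ι × ι × ι × ι) (x y : ℝ),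
      2 * π * ((x - y) * gap ω q) = 2 * π * gap ω q * (x - y) := fun q x y ↦ by ring
  simp only [norm_expSum_pow_four, hphase]
  have hinner : ∀ x, ∫ y in 0..T, ∑ q ∈ s ×ˢ s ×ˢ s ×ˢ s, A q.1 * A q.2.1 * A q.2.2.1 * A q.2.2.2 *
      cos (2 * π * gap ω q * (x - y)) = ∑ q ∈ s ×ˢ s ×ˢ s ×ˢ s,
        A q.1 * A q.2.1 * A q.2.2.1 * A q.2.2.2 * ∫ y in 0..T, cos (2 * π * gap ω q * (x - y)) :=
    fun x ↦ by
      rw [intervalIntegral.integral_finsetSum fun q _ ↦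
        Continuous.intervalIntegrable (by fun_prop) _ _]
      simp only [intervalIntegral.integral_const_mul]
  have hcont : ∀ θ : ℝ, Continuous fun x ↦ ∫ y in 0..T, cos (θ * (x - y)) := fun θ ↦
    intervalIntegral.continuous_parametric_intervalIntegral_of_continuous' (by fun_prop) _ _
  simp only [hinner]
  rw [intervalIntegral.integral_finsetSum fun q _ ↦
    ((hcont (2 * π * gap ω q)).const_mul _).intervalIntegrable _ _]
  simp only [intervalIntegral.integral_const_mul]

lemma integral_norm_expSum_sub_pow_four_le (s : Finset ι) (A ω : ι → ℝ) {x T : ℝ}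
    (hx : x ∈ Icc 0 T) : ∫ y in 0..T, ‖expSum s A ω (x - y)‖ ^ 4 ≤
      2 * ∫ y in 0..T, ‖expSum s A ω y‖ ^ 4 := by
  have hfi : ∀ p q, IntervalIntegrable (fun y ↦ ‖expSum s A ω y‖ ^ 4) volume p q := fun p q ↦
    (continuous_expSum.norm.pow 4).intervalIntegrable _ _
  have hneg : ∫ y in -T..0, ‖expSum s A ω y‖ ^ 4 = ∫ y in 0..T, ‖expSum s A ω y‖ ^ 4 := by
    simpa [norm_expSum_neg] using
      intervalIntegral.integral_comp_neg (a := -T) (b := 0) fun y ↦ ‖expSum s A ω y‖ ^ 4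
  rw [intervalIntegral.integral_comp_sub_left fun y ↦ ‖expSum s A ω y‖ ^ 4, sub_zero]
  calc _ ≤ ∫ y in -T..T, ‖expSum s A ω y‖ ^ 4 :=
        intervalIntegral.integral_mono_interval (by linarith [hx.1]) (by linarith [hx.1, hx.2]) hx.2
          (.of_forall fun y ↦ by positivity) (hfi _ _)
    _ = _ := by
        rw [← intervalIntegral.integral_add_adjacent_intervals (hfi (-T) 0) (hfi 0 T), hneg,
          two_mul]

lemma approxEnergy_le_integral_norm_expSum {T : ℝ} (hst : s ⊆ t) (hA : ∀ i ∈ t, 0 ≤ A i)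
    (hA1 : ∀ i ∈ s, 1 ≤ A i) (hT : 0 < T) :
    approxEnergy ω s (1 / (8 * T)) ≤ 4 / T * ∫ x in 0..T, ‖expSum t A ω x‖ ^ 4 := by
  set J := ∫ x in 0..T, ‖expSum t A ω x‖ ^ 4
  have hlower : T ^ 2 / 2 * approxEnergy ω s (1 / (8 * T)) ≤
      ∫ x in 0..T, ∫ y in 0..T, ‖expSum t A ω (x - y)‖ ^ 4 := by
    rw [integral_integral_norm_expSum_sub_pow_four, approxEnergy, mul_comm, ← nsmul_eq_mul]
    refine (Finset.card_nsmul_le_sum _ _ (T ^ 2 / 2) fun q hq ↦ ?_).trans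
      (Finset.sum_le_sum_of_subset_of_nonneg (fun q hq ↦ ?_) fun q hq _ ↦ ?_)
    · simp only [Finset.mem_filter, Finset.mem_product] at hq
      obtain ⟨⟨h₁, h₂, h₃, h₄⟩, hq⟩ := hq
      refine (sq_div_two_le_integral_integral_cos hT hq).trans (le_mul_of_one_le_left ?_ ?_)
      · rw [integral_integral_cos_sub]; positivity
      · exact one_le_mul_of_one_le_of_one_le (one_le_mul_of_one_le_of_one_le
          (one_le_mul_of_one_le_of_one_le (hA1 _ h₁) (hA1 _ h₂)) (hA1 _ h₃)) (hA1 _ h₄)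
    · simp only [Finset.mem_filter, Finset.mem_product] at hq ⊢
      exact ⟨hst hq.1.1, hst hq.1.2.1, hst hq.1.2.2.1, hst hq.1.2.2.2⟩
    · simp only [Finset.mem_product] at hq
      have := hA _ hq.1
      have := hA _ hq.2.1
      have := hA _ hq.2.2.1
      have := hA _ hq.2.2.2
      rw [integral_integral_cos_sub]
      positivity
  have hupper : ∫ x in 0..T, ∫ y in 0..T, ‖expSum t A ω (x - y)‖ ^ 4 ≤ T * (2 * J) := by
    have hcont : Continuous fun x ↦ ∫ y in 0..T, ‖expSum t A ω (x - y)‖ ^ 4 :=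
      intervalIntegral.continuous_parametric_intervalIntegral_of_continuous'
        ((continuous_expSum.comp (continuous_fst.sub continuous_snd)).norm.pow 4) _ _
    have hmono := intervalIntegral.integral_mono_on (μ := volume) hT.le
      (hcont.intervalIntegrable _ _) intervalIntegrable_const fun x hx ↦
        integral_norm_expSum_sub_pow_four_le t A ω hx
    rwa [intervalIntegral.integral_const, sub_zero, smul_eq_mul] at hmono
  calc (approxEnergy ω s (1 / (8 * T)) : ℝ)
      = 2 / T ^ 2 * (T ^ 2 / 2 * approxEnergy ω s (1 / (8 * T))) := by field
    _ ≤ 2 / T ^ 2 * (T * (2 * J)) :=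
        mul_le_mul_of_nonneg_left (hlower.trans hupper) (by positivity)
    _ = 4 / T * J := by field

lemma integrable_gaussian_mul_cos (u : ℝ) :
    Integrable fun v : ℝ ↦ exp (-π * v ^ 2) * cos (2 * π * (v * u)) :=
  (integrable_exp_neg_mul_sq pi_pos).mul_bdd (c := 1) (by fun_prop)
    (.of_forall fun v ↦ abs_cos_le_one _)

lemma integral_gaussian_mul_cos (u : ℝ) :
    ∫ v : ℝ, exp (-π * v ^ 2) * cos (2 * π * (v * u)) = exp (-π * u ^ 2) := by
  have hF := fourierIntegral_gaussian (b := (π : ℂ)) (by simpa using pi_pos) (2 * π * u : ℝ)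
  have hexp : -((2 * π * u : ℝ) : ℂ) ^ 2 / (4 * π) = (-π * u ^ 2 : ℝ) := by
    push_cast
    field [Complex.ofReal_ne_zero.mpr pi_ne_zero]
  have hterm : ∀ v : ℝ, Complex.exp (Complex.I * (2 * π * u : ℝ) * v) * Complex.exp (-π * v ^ 2) =
      Complex.exp ((2 * π * (v * u) : ℝ) * Complex.I) * (exp (-π * v ^ 2) : ℝ) := fun v ↦ by
    push_cast
    ring_nf
  have hfi : Integrable fun v : ℝ ↦
      Complex.exp ((2 * π * (v * u) : ℝ) * Complex.I) * (exp (-π * v ^ 2) : ℝ) :=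
    (integrable_exp_neg_mul_sq pi_pos).ofReal.bdd_mul (c := 1) (by fun_prop)
      (.of_forall fun v ↦ (Complex.norm_exp_ofReal_mul_I _).le)
  rw [div_self (Complex.ofReal_ne_zero.mpr pi_ne_zero), Complex.one_cpow, one_mul, hexp,
    ← Complex.ofReal_exp] at hF
  simp only [hterm] at hF
  have hre := congrArg Complex.re hF
  rw [← RCLike.re_eq_complex_re, ← integral_re hfi] at hre
  simpa only [RCLike.re_eq_complex_re, Complex.re_mul_ofReal, Complex.exp_ofReal_mul_I_re,
    Complex.ofReal_re, mul_comm (cos _)] using hre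

lemma integral_norm_expSum_pow_four_mul_gaussian (s : Finset ι) (A ω : ι → ℝ) (μ : ℝ) :
    ∫ v : ℝ, exp (-π * v ^ 2) * ‖expSum s A ω (v * μ)‖ ^ 4 = ∑ q ∈ s ×ˢ s ×ˢ s ×ˢ s,
      A q.1 * A q.2.1 * A q.2.2.1 * A q.2.2.2 * exp (-π * (μ * gap ω q) ^ 2) := by
  have hterm : ∀ v : ℝ, exp (-π * v ^ 2) * ‖expSum s A ω (v * μ)‖ ^ 4 =
      ∑ q ∈ s ×ˢ s ×ˢ s ×ˢ s, A q.1 * A q.2.1 * A q.2.2.1 * A q.2.2.2 *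
        (exp (-π * v ^ 2) * cos (2 * π * (v * (μ * gap ω q)))) := fun v ↦ by
    rw [norm_expSum_pow_four, Finset.mul_sum]
    exact Finset.sum_congr rfl fun q _ ↦ by rw [mul_left_comm, mul_assoc v]
  simp only [hterm]
  rw [integral_finsetSum _ fun q _ ↦ (integrable_gaussian_mul_cos _).const_mul _]
  simp only [integral_const_mul, integral_gaussian_mul_cos]

lemma summable_half_pow_mul_ite (p : ℕ → Prop) [DecidablePred p] :
    Summable fun k ↦ (1 / 2 : ℝ) ^ k * if p k then 1 else 0 :=
  summable_geometric_two.of_nonneg_of_le (fun k ↦ by positivity) fun k ↦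
    mul_le_of_le_one_right (by positivity) (by split_ifs <;> norm_num)

lemma exp_neg_pi_mul_sq_le_tsum (z : ℝ) :
    exp (-π * z ^ 2) ≤ ∑' k : ℕ, (1 / 2 : ℝ) ^ k * if |z| ≤ k + 1 then 1 else 0 := by
  set k := ⌊|z|⌋₊
  have hkz : (k : ℝ) ≤ |z| := Nat.floor_le (abs_nonneg z)
  have hk : (k : ℝ) ≤ π * z ^ 2 := by
    calc (k : ℝ) ≤ (k : ℝ) ^ 2 := by exact_mod_cast Nat.le_self_pow two_ne_zero k
      _ ≤ z ^ 2 := by rw [← sq_abs z]; gcongr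
      _ ≤ π * z ^ 2 := le_mul_of_one_le_left (sq_nonneg z) (by linarith [pi_gt_three])
  have hhalf : exp (-1) ≤ 1 / 2 := by
    rw [exp_neg, one_div]
    exact inv_anti₀ two_pos (by linarith [exp_one_gt_d9])
  calc exp (-π * z ^ 2) ≤ exp (-1) ^ k := by
        rw [← exp_nat_mul]; exact exp_le_exp.mpr (by linarith)
    _ ≤ (1 / 2) ^ k := by gcongr
    _ = (1 / 2) ^ k * if |z| ≤ k + 1 then 1 else 0 := by
        rw [if_pos (Nat.lt_floor_add_one _).le, mul_one]
    _ ≤ _ := (summable_half_pow_mul_ite fun k : ℕ ↦ |z| ≤ k + 1).le_tsum k fun j _ ↦ by positivity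

lemma sum_exp_neg_pi_mul_sq_le (s : Finset ι) (z : ι → ℝ) {α β : ℝ}
    (h : ∀ k : ℕ, ({i ∈ s | |z i| ≤ k + 1}.card : ℝ) ≤ α + β * (k + 1)) :
    ∑ i ∈ s, exp (-π * z i ^ 2) ≤ 2 * α + 4 * β := by
  have hmajor : HasSum (fun k : ℕ ↦ (1 / 2 : ℝ) ^ k * (α + β * (k + 1))) (2 * α + 4 * β) := by
    have hlin := (hasSum_geometric_two.mul_left (α + β)).add
      ((hasSum_coe_mul_geometric_of_norm_lt_one (r := (1 / 2 : ℝ)) (by norm_num)).mul_left β)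
    have hvalue : (α + β) * 2 + β * (1 / 2 / (1 - 1 / 2) ^ 2) = 2 * α + 4 * β := by norm_num; ring
    rw [hvalue] at hlin
    exact hlin.congr_fun fun k ↦ by ring
  calc ∑ i ∈ s, exp (-π * z i ^ 2)
      ≤ ∑ i ∈ s, ∑' k : ℕ, (1 / 2 : ℝ) ^ k * if |z i| ≤ k + 1 then 1 else 0 :=
        Finset.sum_le_sum fun i _ ↦ exp_neg_pi_mul_sq_le_tsum (z i)
    _ = ∑' k : ℕ, (1 / 2 : ℝ) ^ k * ({i ∈ s | |z i| ≤ k + 1}.card : ℝ) := by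
        rw [← Summable.tsum_finsetSum fun i _ ↦ summable_half_pow_mul_ite _]
        simp only [← Finset.mul_sum, Finset.sum_boole]
    _ ≤ 2 * α + 4 * β := by
        refine hmajor.tsum_eq ▸ Summable.tsum_le_tsum (fun k ↦ by gcongr; exact h k)
          (hmajor.summable.of_nonneg_of_le (fun k ↦ by positivity) fun k ↦ by gcongr; exact h k)
          hmajor.summable

lemma integral_norm_expSum_pow_four_le {α β μ : ℝ} (hμ : 0 < μ)
    (h : ∀ δ > 0, approxEnergy ω s δ ≤ α + β * δ) :
    ∫ v in 0..1, ‖expSum s (fun _ ↦ 1) ω (v * μ)‖ ^ 4 ≤ exp π * (2 * α + 4 * (β / μ)) := by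
  have hcont : Continuous fun v ↦ ‖expSum s (fun _ ↦ 1) ω (v * μ)‖ ^ 4 :=
    (continuous_expSum.comp (continuous_mul_const μ)).norm.pow 4
  have hsum : ∫ v : ℝ, exp (-π * v ^ 2) * ‖expSum s (fun _ ↦ 1) ω (v * μ)‖ ^ 4 ≤
      2 * α + 4 * (β / μ) := by
    rw [integral_norm_expSum_pow_four_mul_gaussian]
    simp only [mul_one, one_mul]
    refine sum_exp_neg_pi_mul_sq_le _ _ fun k ↦ ?_
    convert h ((k + 1) / μ) (by positivity) using 2
    · rw [approxEnergy]
      congr 2 with q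
      rw [abs_mul, abs_of_pos hμ, le_div_iff₀' hμ]
    · ring
  have hfi : Integrable fun v : ℝ ↦ exp (-π * v ^ 2) * ‖expSum s (fun _ ↦ 1) ω (v * μ)‖ ^ 4 :=
    (integrable_exp_neg_mul_sq pi_pos).mul_bdd (c := (∑ _i ∈ s, |(1 : ℝ)|) ^ 4)
      hcont.aestronglyMeasurable (.of_forall fun v ↦ by
        rw [norm_pow, norm_norm]; gcongr; exact norm_expSum_le _ _ _ _)
  rw [intervalIntegral.integral_of_le zero_le_one]
  calc ∫ v in Ioc 0 1, ‖expSum s (fun _ ↦ 1) ω (v * μ)‖ ^ 4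
      ≤ ∫ v in Ioc 0 1, exp π * (exp (-π * v ^ 2) * ‖expSum s (fun _ ↦ 1) ω (v * μ)‖ ^ 4) := by
        refine setIntegral_mono_on hcont.integrableOn_Ioc (hfi.const_mul _).integrableOn
          measurableSet_Ioc fun v hv ↦ ?_
        rw [← mul_assoc, ← exp_add]
        refine le_mul_of_one_le_left (by positivity) (one_le_exp ?_)
        nlinarith [pi_pos, pow_le_one₀ (n := 2) hv.1.le hv.2]
    _ ≤ exp π * ∫ v : ℝ, exp (-π * v ^ 2) * ‖expSum s (fun _ ↦ 1) ω (v * μ)‖ ^ 4 := by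
        rw [integral_const_mul]
        exact mul_le_mul_of_nonneg_left
          (setIntegral_le_integral hfi (.of_forall fun v ↦ by positivity)) (exp_pos π).le
    _ ≤ _ := by gcongr

end ApproximateEnergy

section Weight

open Set MeasureTheory

/-- The smooth cut-off functions used to localise exponential sums to the interval `(a, b)`. -/
structure IsWeight (W : ℝ → ℝ) (a b : ℝ) : Prop where
  contDiff : ContDiff ℝ 2 W
  tsupport_subset : tsupport W ⊆ Ioo a b

namespace IsWeight

variable {W : ℝ → ℝ} {a b : ℝ} (hW : IsWeight W a b)
include hW

lemma hasDerivAt (u : ℝ) : HasDerivAt W (deriv W u) u :=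
  (hW.contDiff.differentiable two_ne_zero u).hasDerivAt

lemma contDiff_deriv : ContDiff ℝ 1 (deriv W) :=
  (contDiff_succ_iff_deriv.mp (by simpa only [one_add_one_eq_two] using hW.contDiff)).2.2

lemma hasDerivAt_deriv (u : ℝ) : HasDerivAt (deriv W) (deriv (deriv W) u) u :=
  (hW.contDiff_deriv.differentiable one_ne_zero u).hasDerivAt

lemma continuous_deriv_deriv : Continuous (deriv (deriv W)) :=
  hW.contDiff_deriv.continuous_deriv le_rfl

lemma eq_zero {u : ℝ} (hu : u ∉ Ioo a b) : W u = 0 :=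
  image_eq_zero_of_notMem_tsupport fun h ↦ hu (hW.tsupport_subset h)

lemma deriv_eq_zero {u : ℝ} (hu : u ∉ Ioo a b) : deriv W u = 0 :=
  image_eq_zero_of_notMem_tsupport fun h ↦ hu (hW.tsupport_subset (tsupport_deriv_subset h))

lemma integral_mul_eq (f : ℝ → ℂ) : ∫ u, (W u : ℂ) * f u = ∫ u in a..b, (W u : ℂ) * f u := by
  refine (intervalIntegral.integral_eq_integral_of_support_subset fun u hu ↦ ?_).symm
  by_contra h
  exact hu (by simp only [hW.eq_zero fun h' ↦ h (Ioo_subset_Ioc_self h'), Complex.ofReal_zero,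
    zero_mul])

lemma exists_bound : ∃ B, ∀ u, |W u| ≤ B ∧ |deriv W u| ≤ B ∧ |deriv (deriv W) u| ≤ B := by
  have hcs : HasCompactSupport W :=
    isCompact_Icc.of_isClosed_subset (isClosed_tsupport W)
      (hW.tsupport_subset.trans Ioo_subset_Icc_self)
  obtain ⟨B₀, hB₀⟩ := hcs.exists_bound_of_continuous hW.contDiff.continuous
  obtain ⟨B₁, hB₁⟩ := hcs.deriv.exists_bound_of_continuous hW.contDiff_deriv.continuous
  obtain ⟨B₂, hB₂⟩ := hcs.deriv.deriv.exists_bound_of_continuous hW.continuous_deriv_deriv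
  exact ⟨max B₀ (max B₁ B₂), fun u ↦ ⟨(hB₀ u).trans (le_max_left _ _),
    (hB₁ u).trans ((le_max_left _ _).trans (le_max_right _ _)),
    (hB₂ u).trans ((le_max_right _ _).trans (le_max_right _ _))⟩⟩

end IsWeight

lemma exists_isWeight {a b : ℝ} (ha : 0 < a) (hab : a < b) :
    ∃ W : ℝ → ℝ, IsWeight W (a / 4) (b + a) ∧ (∀ u, 0 ≤ W u) ∧ ∀ u ∈ Icc a b, W u = 1 := by
  let W : ContDiffBump ((a + b) / 2) := ⟨(b - a) / 2, b / 2, by linarith, by linarith⟩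
  refine ⟨W, ⟨W.contDiff, ?_⟩, fun u ↦ W.nonneg, fun u hu ↦ W.one_of_mem_closedBall ?_⟩
  · rw [W.tsupport_eq, Real.closedBall_eq_Icc]
    exact Icc_subset_Ioo (by simp only [W]; linarith) (by simp only [W]; linarith)
  · rw [Real.closedBall_eq_Icc]
    exact ⟨by simp only [W]; linarith [hu.1], by simp only [W]; linarith [hu.2]⟩

end Weight

section IntegrationByParts

open Real Set MeasureTheory intervalIntegral
open scoped FourierTransform

lemma norm_integral_mul_deriv_mul_fourierChar_le {a b : ℝ} {F F' q q' : ℝ → ℝ}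
    (hF : ∀ u ∈ uIcc a b, HasDerivAt F (F' u) u) (hF' : ContinuousOn F' (uIcc a b))
    (hq : ∀ u ∈ uIcc a b, HasDerivAt q (q' u) u) (hq' : ContinuousOn q' (uIcc a b))
    (hqa : q a = 0) (hqb : q b = 0) :
    ‖∫ u in a..b, ((q u * F' u : ℝ) : ℂ) * 𝐞 (F u)‖ ≤ ‖∫ u in a..b, (q' u : ℂ) * 𝐞 (F u)‖ := by
  rw [integral_mul_deriv_mul_fourierChar hF hF' hq hq', hqa, hqb, Complex.ofReal_zero, zero_mul,
    zero_mul, sub_zero, zero_sub, norm_mul, norm_neg, norm_inv]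
  refine mul_le_of_le_one_left (norm_nonneg _) (inv_le_one_of_one_le₀ ?_)
  rw [norm_mul, norm_mul, Complex.norm_I, Complex.norm_real, Complex.norm_two, Real.norm_eq_abs,
    abs_of_pos pi_pos]
  linarith [Real.pi_gt_three]

lemma abs_mul_add_mul_add_mul_add_mul_le {B D x₀ x₁ x₂ y₀ y₁ y₂ : ℝ}
    (hx : |x₀| ≤ B ∧ |x₁| ≤ B ∧ |x₂| ≤ B) (hy : |y₀| ≤ D ∧ |y₁| ≤ D ∧ |y₂| ≤ D) :
    |x₂ * y₀ + x₁ * y₁ + (x₁ * y₁ + x₀ * y₂)| ≤ 4 * B * D := by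
  obtain ⟨hx₀, hx₁, hx₂⟩ := hx
  obtain ⟨hy₀, hy₁, hy₂⟩ := hy
  have hmul : ∀ {x y : ℝ}, |x| ≤ B → |y| ≤ D → |x * y| ≤ B * D := fun hx hy ↦ by
    rw [abs_mul]
    exact mul_le_mul hx hy (abs_nonneg _) ((abs_nonneg _).trans hx)
  calc _ ≤ (B * D + B * D) + (B * D + B * D) :=
        (abs_add_le _ _).trans (add_le_add
          ((abs_add_le _ _).trans (add_le_add (hmul hx₂ hy₀) (hmul hx₁ hy₁)))
          ((abs_add_le _ _).trans (add_le_add (hmul hx₁ hy₁) (hmul hx₀ hy₂))))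
    _ = _ := by ring

lemma norm_integral_weight_mul_deriv_mul_fourierChar_le {a b B D K : ℝ}
    {W F F' p p' p'' : ℝ → ℝ} (hab : a ≤ b) (hW : IsWeight W a b)
    (hB : ∀ u, |W u| ≤ B ∧ |deriv W u| ≤ B ∧ |deriv (deriv W) u| ≤ B) (hFc : Continuous F)
    (hF : ∀ u ∈ Icc a b, HasDerivAt F (F' u) u) (hF' : ContinuousOn F' (Icc a b))
    (hp : ∀ u ∈ Icc a b, HasDerivAt p (p' u) u) (hp' : ∀ u ∈ Icc a b, HasDerivAt p' (p'' u) u)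
    (hp'' : ContinuousOn p'' (Icc a b)) (hD : ∀ u ∈ Icc a b, |p u| ≤ D ∧ |p' u| ≤ D ∧ |p'' u| ≤ D)
    (hK : ∀ u ∈ Icc a b, ‖∫ v in a..u, (𝐞 (F v) : ℂ)‖ ≤ K) :
    ‖∫ u, (W u : ℂ) * ((p u * F' u : ℝ) * 𝐞 (F u))‖ ≤ 4 * B * D * K * (b - a) := by
  let g : ℝ → ℝ := fun u ↦ deriv W u * p u + W u * p' u
  let g' : ℝ → ℝ := fun u ↦
    (deriv (deriv W) u * p u + deriv W u * p' u) + (deriv W u * p' u + W u * p'' u)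
  have hq : ∀ u ∈ Icc a b, HasDerivAt (fun u ↦ W u * p u) (g u) u :=
    fun u hu ↦ (hW.hasDerivAt u).fun_mul (hp u hu)
  have hg : ∀ u ∈ Icc a b, HasDerivAt g (g' u) u := fun u hu ↦
    ((hW.hasDerivAt_deriv u).fun_mul (hp u hu)).fun_add ((hW.hasDerivAt u).fun_mul (hp' u hu))
  have hg'c : ContinuousOn g' (Icc a b) := by
    have hW₁ := hW.contDiff_deriv.continuous.continuousOn (s := Icc a b)
    have hpc : ContinuousOn p (Icc a b) := HasDerivAt.continuousOn hp
    have hp'c : ContinuousOn p' (Icc a b) := HasDerivAt.continuousOn hp'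
    exact ((hW.continuous_deriv_deriv.continuousOn.mul hpc).add (hW₁.mul hp'c)).add
      ((hW₁.mul hp'c).add (hW.contDiff.continuous.continuousOn.mul hp''))
  have hg'le : ∀ u ∈ Icc a b, |g' u| ≤ 4 * B * D := fun u hu ↦
    abs_mul_add_mul_add_mul_add_mul_le (hB u) (hD u hu)
  have hb : b ∉ Ioo a b := fun h ↦ h.2.false
  have hgb : g b = 0 := by simp only [g, hW.eq_zero hb, hW.deriv_eq_zero hb, zero_mul, add_zero]
  have hqF : ∫ u, (W u : ℂ) * ((p u * F' u : ℝ) * 𝐞 (F u)) =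
      ∫ u in a..b, ((W u * p u * F' u : ℝ) : ℂ) * 𝐞 (F u) := by
    rw [hW.integral_mul_eq]
    congr with u
    push_cast
    ring
  rw [hqF]
  refine le_trans ?_ (norm_integral_mul_le_of_forall_norm_integral_le hab
    (continuous_coe_fourierChar.comp hFc) hg hg'c hgb hg'le hK)
  rw [← uIcc_of_le hab] at hF hF' hq hg
  exact norm_integral_mul_deriv_mul_fourierChar_le hF hF' hq
    (HasDerivAt.continuousOn hg)
    (by simp only [hW.eq_zero fun h ↦ h.1.false, zero_mul])
    (by simp only [hW.eq_zero hb, zero_mul])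

lemma hasDerivAt_neg_mul_inv_mul_inv {f f' f'' : ℝ → ℝ} {u : ℝ} (hf : HasDerivAt f (f' u) u)
    (hf' : HasDerivAt f' (f'' u) u) (h0 : f u ≠ 0) :
    HasDerivAt (fun u ↦ -(f' u * (f u)⁻¹) * (f u)⁻¹)
      ((-(f'' u * (f u)⁻¹) + 2 * (f' u * (f u)⁻¹) ^ 2) * (f u)⁻¹) u := by
  refine ((hf'.fun_mul (hf.fun_inv h0)).fun_neg.fun_mul (hf.fun_inv h0)).congr_deriv ?_
  field

lemma abs_inv_deriv_le {A l d s t : ℝ} (hl : 0 < l) (hA : 0 ≤ A) (hd : l ≤ |d|)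
    (hs : |s| ≤ A * l) (ht : |t| ≤ A * l) :
    |d⁻¹| ≤ (1 + A + 2 * A ^ 2) / l ∧ |-(s * d⁻¹) * d⁻¹| ≤ (1 + A + 2 * A ^ 2) / l ∧
      |(-(t * d⁻¹) + 2 * (s * d⁻¹) ^ 2) * d⁻¹| ≤ (1 + A + 2 * A ^ 2) / l := by
  have hr : |d⁻¹| ≤ 1 / l := by rw [abs_inv, one_div]; exact inv_anti₀ hl hd
  have hmul : ∀ {y}, |y| ≤ A * l → |y * d⁻¹| ≤ A := fun {y} hy ↦ by
    rw [abs_mul]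
    calc |y| * |d⁻¹| ≤ A * l * (1 / l) := by gcongr
      _ = A := by field
  have hscale : ∀ {y}, |y| ≤ 1 + A + 2 * A ^ 2 → |y * d⁻¹| ≤ (1 + A + 2 * A ^ 2) / l :=
    fun {y} hy ↦ by
      rw [abs_mul, ← mul_one_div]
      gcongr
  refine ⟨?_, hscale ?_, hscale ?_⟩
  · simpa using hscale (y := 1) (by rw [abs_one]; nlinarith)
  · rw [abs_neg]
    nlinarith [hmul hs]
  · refine (abs_add_le _ _).trans ?_
    rw [abs_neg, abs_mul 2, abs_two, abs_pow]
    nlinarith [hmul ht, pow_le_pow_left₀ (abs_nonneg _) (hmul hs) 2]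

lemma norm_integral_fourierChar_le_of_le_abs_deriv {a b l : ℝ} {F F' F'' : ℝ → ℝ} (hl : 0 < l)
    (hF : ∀ u ∈ Icc a b, HasDerivAt F (F' u) u) (hF' : ∀ u ∈ Icc a b, HasDerivAt F' (F'' u) u)
    (hF'' : ContinuousOn F'' (Icc a b)) (hF''0 : ∀ u ∈ Icc a b, 0 ≤ F'' u)
    (hlF : (∀ u ∈ Icc a b, l ≤ F' u) ∨ ∀ u ∈ Icc a b, F' u ≤ -l) {u : ℝ} (hu : u ∈ Icc a b) :
    ‖∫ v in a..u, (𝐞 (F v) : ℂ)‖ ≤ 1 / l := by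
  have hsub : Icc a u ⊆ Icc a b := Icc_subset_Icc_right hu.2
  have hF₁ : ∀ v ∈ Icc a u, HasDerivAt F (F' v) v := fun v hv ↦ hF v (hsub hv)
  have hF₂ : ∀ v ∈ Icc a u, HasDerivAt F' (F'' v) v := fun v hv ↦ hF' v (hsub hv)
  have hF₃ : ∀ v ∈ Icc a u, 0 ≤ F'' v := fun v hv ↦ hF''0 v (hsub hv)
  rcases hlF with h | h
  · exact norm_integral_fourierChar_le_of_le_deriv hu.1 hl hF₁ hF₂ (hF''.mono hsub) hF₃
      fun v hv ↦ h v (hsub hv)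
  · exact norm_integral_fourierChar_le_of_deriv_le hu.1 hl hF₁ hF₂ (hF''.mono hsub) hF₃
      fun v hv ↦ h v (hsub hv)

lemma norm_integral_weight_mul_fourierChar_le {a b l A B : ℝ} {W F F' F'' F''' : ℝ → ℝ}
    (hab : a ≤ b) (hl : 0 < l) (hA0 : 0 ≤ A) (hW : IsWeight W a b)
    (hB : ∀ u, |W u| ≤ B ∧ |deriv W u| ≤ B ∧ |deriv (deriv W) u| ≤ B) (hFc : Continuous F)
    (hF : ∀ u ∈ Icc a b, HasDerivAt F (F' u) u) (hF' : ∀ u ∈ Icc a b, HasDerivAt F' (F'' u) u)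
    (hF'' : ∀ u ∈ Icc a b, HasDerivAt F'' (F''' u) u) (hF''' : ContinuousOn F''' (Icc a b))
    (hF''0 : ∀ u ∈ Icc a b, 0 ≤ F'' u)
    (hlF : (∀ u ∈ Icc a b, l ≤ F' u) ∨ ∀ u ∈ Icc a b, F' u ≤ -l)
    (hA : ∀ u ∈ Icc a b, |F'' u| ≤ A * l ∧ |F''' u| ≤ A * l) :
    ‖∫ u, (W u : ℂ) * 𝐞 (F u)‖ ≤ 4 * B * (1 + A + 2 * A ^ 2) * (b - a) / l ^ 2 := by
  have hF'abs : ∀ u ∈ Icc a b, l ≤ |F' u| := fun u hu ↦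
    le_abs.mpr (hlF.imp (fun h ↦ h u hu) fun h ↦ le_neg_of_le_neg (h u hu))
  have hF'ne : ∀ u ∈ Icc a b, F' u ≠ 0 := fun u hu ↦ abs_pos.mp (hl.trans_le (hF'abs u hu))
  have hF'c : ContinuousOn F' (Icc a b) := HasDerivAt.continuousOn hF'
  have hF''c : ContinuousOn F'' (Icc a b) := HasDerivAt.continuousOn hF''
  have hinv : ContinuousOn (fun u ↦ (F' u)⁻¹) (Icc a b) := hF'c.inv₀ hF'ne
  have hparts := norm_integral_weight_mul_deriv_mul_fourierChar_le hab hW hB hFc hF hF'c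
    (p := fun u ↦ (F' u)⁻¹) (p' := fun u ↦ -(F'' u * (F' u)⁻¹) * (F' u)⁻¹)
    (fun u hu ↦ ((hF' u hu).fun_inv (hF'ne u hu)).congr_deriv (by field [hF'ne u hu]))
    (fun u hu ↦ hasDerivAt_neg_mul_inv_mul_inv (hF' u hu) (hF'' u hu) (hF'ne u hu))
    (((hF'''.mul hinv).neg.add (continuousOn_const.mul ((hF''c.mul hinv).pow 2))).mul hinv)
    (fun u hu ↦ abs_inv_deriv_le hl hA0 (hF'abs u hu) (hA u hu).1 (hA u hu).2)
    fun u hu ↦ norm_integral_fourierChar_le_of_le_abs_deriv hl hF hF' hF''c hF''0 hlF hu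
  have hcancel : ∫ u, (W u : ℂ) * 𝐞 (F u) = ∫ u, (W u : ℂ) * (((F' u)⁻¹ * F' u : ℝ) * 𝐞 (F u)) := by
    rw [hW.integral_mul_eq, hW.integral_mul_eq]
    refine integral_congr fun u hu ↦ ?_
    rw [uIcc_of_le hab] at hu
    simp only [inv_mul_cancel₀ (hF'ne u hu), Complex.ofReal_one, one_mul]
  calc ‖∫ u, (W u : ℂ) * 𝐞 (F u)‖ ≤ 4 * B * ((1 + A + 2 * A ^ 2) / l) * (1 / l) * (b - a) := by
        rw [hcancel]; exact hparts
    _ = _ := by field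

end IntegrationByParts

section PowerPhase

open Real Set MeasureTheory intervalIntegral
open scoped FourierTransform

variable {a b c : ℝ}

lemma hasDerivAt_mul_rpow {s u : ℝ} (x : ℝ) (hu : 0 < u) :
    HasDerivAt (fun u : ℝ ↦ x * u ^ s) (x * s * u ^ (s - 1)) u :=
  ((Real.hasDerivAt_rpow_const (.inl hu.ne')).const_mul x).congr_deriv (mul_assoc _ _ _).symm

lemma hasDerivAt_mul_rpow_sub_mul_add {u : ℝ} (x y z : ℝ) (hu : 0 < u) :
    HasDerivAt (fun u : ℝ ↦ x * u ^ c - y * u + z) (x * c * u ^ (c - 1) - y) u := by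
  simpa using ((hasDerivAt_mul_rpow x hu).fun_sub ((hasDerivAt_id u).const_mul y)).add_const z

lemma hasDerivAt_mul_rpow_sub {u : ℝ} (x y : ℝ) (hu : 0 < u) :
    HasDerivAt (fun u : ℝ ↦ x * c * u ^ (c - 1) - y) (x * c * (c - 1) * u ^ (c - 2)) u :=
  ((hasDerivAt_mul_rpow (x * c) hu).sub_const y).congr_deriv (by ring_nf)

lemma continuousOn_rpow_Icc (ha : 0 < a) (s : ℝ) : ContinuousOn (fun u : ℝ ↦ u ^ s) (Icc a b) :=
  fun _ hu ↦ (Real.continuousAt_rpow_const _ _ (.inl (ha.trans_le hu.1).ne')).continuousWithinAt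

lemma continuous_mul_rpow_sub_mul_add (hc : 0 ≤ c) (x y z : ℝ) :
    Continuous fun u : ℝ ↦ x * u ^ c - y * u + z := by
  have := Real.continuous_rpow_const hc
  fun_prop

lemma exists_norm_integral_fourierChar_rpow_le (hc : 1 < c) (ha : 0 < a) (b : ℝ) :
    ∃ K > 0, ∀ x > 0, ∀ y z, ∀ u ∈ Icc a b,
      ‖∫ v in a..u, (𝐞 (x * v ^ c - y * v + z) : ℂ)‖ ≤ K / √x := by
  have hcc : 0 < c * (c - 1) := mul_pos (by linarith) (by linarith)
  obtain ⟨κ, hκ, hle⟩ := isCompact_Icc.exists_forall_le' (a := 0)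
    (continuousOn_const.mul (continuousOn_rpow_Icc (b := b) ha (c - 2)))
    fun u hu ↦ mul_pos hcc (rpow_pos_of_pos (ha.trans_le hu.1) _)
  refine ⟨4 / √κ, by positivity, fun x hx y z u hu ↦ ?_⟩
  have hpos : ∀ v ∈ Icc a u, 0 < v := fun v hv ↦ ha.trans_le hv.1
  calc _ ≤ 4 / √(x * κ) := by
        refine norm_integral_fourierChar_le_of_le_deriv2 hu.1 (by positivity)
          (fun v hv ↦ hasDerivAt_mul_rpow_sub_mul_add x y z (hpos v hv))
          (fun v hv ↦ hasDerivAt_mul_rpow_sub x y (hpos v hv))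
          (continuousOn_const.mul (continuousOn_rpow_Icc ha _)) fun v hv ↦ ?_
        calc x * κ ≤ x * (c * (c - 1) * v ^ (c - 2)) := by
              gcongr
              exact hle v (Icc_subset_Icc_right hu.2 hv)
          _ = _ := by ring
    _ = 4 / √κ / √x := by rw [Real.sqrt_mul hx.le]; field

/-- The oscillatory integral `∫ W(u) e(x u ^ c - y u) du`, where `e(θ) = exp(2πiθ)`. -/
noncomputable def powerIntegral (c : ℝ) (W : ℝ → ℝ) (x y : ℝ) : ℂ :=
  ∫ u, (W u : ℂ) * 𝐞 (x * u ^ c - y * u)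

lemma exists_mul_add_abs_le_abs_deriv (hc : 1 < c) (ha : 0 < a) (hab : a ≤ b) :
    ∃ κ > 0, ∀ x > 0, ∀ y, (y ≤ c * a ^ (c - 1) / 2 * x ∨ 2 * c * b ^ (c - 1) * x ≤ y) →
      (∀ u ∈ Icc a b, κ * (x + |y|) ≤ x * c * u ^ (c - 1) - y) ∨
        ∀ u ∈ Icc a b, x * c * u ^ (c - 1) - y ≤ -(κ * (x + |y|)) := by
  have hα : 0 < c * a ^ (c - 1) := by positivity
  have hmono : ∀ u ∈ Icc a b, ∀ v ∈ Icc a b, u ≤ v → c * u ^ (c - 1) ≤ c * v ^ (c - 1) :=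
    fun u hu v _ huv ↦ by
      have := ha.trans_le hu.1
      gcongr
  have haI := left_mem_Icc.mpr hab
  have hbI := right_mem_Icc.mpr hab
  set α := c * a ^ (c - 1)
  refine ⟨min (1 / 4) (α / 4), by positivity, fun x hx y hy ↦ ?_⟩
  have hκ : min (1 / 4) (α / 4) * (x + |y|) ≤ α / 4 * x + 1 / 4 * |y| := by
    rw [mul_add]
    gcongr
    exacts [min_le_right _ _, min_le_left _ _]
  rcases hy with hy | hy
  · refine .inl fun u hu ↦ hκ.trans ?_
    have := mul_le_mul_of_nonneg_left (hmono a haI u hu hu.1) hx.le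
    rcases abs_cases y with ⟨h, _⟩ | ⟨h, _⟩ <;> rw [h] <;> nlinarith
  · refine .inr fun u hu ↦ ?_
    have hub := mul_le_mul_of_nonneg_left (hmono u hu b hbI hu.2) hx.le
    have hab' := mul_le_mul_of_nonneg_left (hmono a haI b hbI hab) hx.le
    have hy0 : 0 < y := by nlinarith
    rw [abs_of_pos hy0] at hκ ⊢
    nlinarith

lemma exists_abs_deriv_mul_rpow_le (ha : 0 < a) (b c : ℝ) :
    ∃ D ≥ 0, ∀ x > 0, ∀ u ∈ Icc a b, |x * c * (c - 1) * u ^ (c - 2)| ≤ D * x ∧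
      |x * c * (c - 1) * (c - 2) * u ^ (c - 2 - 1)| ≤ D * x := by
  have hbound : ∀ s : ℝ, ∃ D, ∀ u ∈ Icc a b, |u ^ s| ≤ D := fun s ↦
    isCompact_Icc.exists_bound_of_continuousOn (continuousOn_rpow_Icc ha s)
  obtain ⟨D₂, hD₂⟩ := hbound (c - 2)
  obtain ⟨D₃, hD₃⟩ := hbound (c - 2 - 1)
  refine ⟨max (|c * (c - 1)| * |D₂|) (|c * (c - 1) * (c - 2)| * |D₃|),
    le_max_of_le_left (by positivity), fun x hx u hu ↦ ⟨?_, ?_⟩⟩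
  · calc |x * c * (c - 1) * u ^ (c - 2)| = |c * (c - 1)| * |u ^ (c - 2)| * x := by
          rw [mul_assoc x, mul_assoc x, abs_mul x, abs_mul (c * _), abs_of_pos hx, mul_comm]
      _ ≤ _ := by
          gcongr
          exact le_max_of_le_left (mul_le_mul_of_nonneg_left
            ((hD₂ u hu).trans (le_abs_self _)) (abs_nonneg _))
  · calc |x * c * (c - 1) * (c - 2) * u ^ (c - 2 - 1)|
        = |c * (c - 1) * (c - 2)| * |u ^ (c - 2 - 1)| * x := by
          rw [mul_assoc x, mul_assoc x, mul_assoc x, abs_mul x, abs_mul (c * _ * _), abs_of_pos hx,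
            mul_comm]
      _ ≤ _ := by
          gcongr
          exact le_max_of_le_right (mul_le_mul_of_nonneg_left
            ((hD₃ u hu).trans (le_abs_self _)) (abs_nonneg _))

lemma exists_norm_powerIntegral_le (hc : 1 < c) (ha : 0 < a) (hab : a ≤ b) {W : ℝ → ℝ}
    (hW : IsWeight W a b) : ∃ K > 0, ∀ x > 0, ∀ y,
      (y ≤ c * a ^ (c - 1) / 2 * x ∨ 2 * c * b ^ (c - 1) * x ≤ y) →
        ‖powerIntegral c W x y‖ ≤ K / (x + |y|) ^ 2 := by
  obtain ⟨κ, hκ, hlow⟩ := exists_mul_add_abs_le_abs_deriv hc ha hab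
  obtain ⟨B, hB⟩ := hW.exists_bound
  obtain ⟨D, hD0, hD⟩ := exists_abs_deriv_mul_rpow_le ha b c
  have hB0 : 0 ≤ B := (abs_nonneg _).trans (hB a).1
  set A := D / κ
  have hA0 : 0 ≤ A := by positivity
  refine ⟨4 * B * (1 + A + 2 * A ^ 2) * (b - a) / κ ^ 2 + 1, by positivity, fun x hx y hy ↦ ?_⟩
  have hpos : ∀ u ∈ Icc a b, 0 < u := fun u hu ↦ ha.trans_le hu.1
  have hDA : D * x ≤ A * (κ * (x + |y|)) := calc
    D * x ≤ D * (x + |y|) := by gcongr; exact le_add_of_nonneg_right (abs_nonneg y)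
    _ = _ := by simp only [A]; field
  have hcc : 0 ≤ x * c * (c - 1) := mul_nonneg (by positivity) (by linarith)
  have hbound := norm_integral_weight_mul_fourierChar_le (W := W) (A := A) hab
    (mul_pos hκ (by positivity : 0 < x + |y|)) hA0 hW hB
    (continuous_mul_rpow_sub_mul_add (by linarith) x y 0)
    (fun u hu ↦ hasDerivAt_mul_rpow_sub_mul_add x y 0 (hpos u hu))
    (fun u hu ↦ hasDerivAt_mul_rpow_sub x y (hpos u hu))
    (fun u hu ↦ hasDerivAt_mul_rpow (x * c * (c - 1)) (hpos u hu))
    (continuousOn_const.mul (continuousOn_rpow_Icc ha _))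
    (fun u hu ↦ mul_nonneg hcc (rpow_nonneg (hpos u hu).le _)) (hlow x hx y hy)
    fun u hu ↦ ⟨(hD x hx u hu).1.trans hDA, (hD x hx u hu).2.trans hDA⟩
  simp only [add_zero] at hbound
  calc _ ≤ _ := hbound
    _ = 4 * B * (1 + A + 2 * A ^ 2) * (b - a) / κ ^ 2 / (x + |y|) ^ 2 := by field
    _ ≤ _ := by gcongr; linarith

end PowerPhase

section StationaryPhase

open Real Set MeasureTheory intervalIntegral Filter Topology
open scoped FourierTransform

variable {a b c : ℝ}

lemma analyticAt_dslope {f : ℝ → ℝ} {x y : ℝ} (hx : AnalyticAt ℝ f x) (hy : AnalyticAt ℝ f y) :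
    AnalyticAt ℝ (dslope f x) y := by
  rcases eq_or_ne y x with rfl | hne
  · obtain ⟨p, hp⟩ := hx
    exact ⟨_, hp.has_fpower_series_dslope_fslope⟩
  · have hslope : AnalyticAt ℝ (slope f x) y :=
      ((analyticAt_id.sub analyticAt_const).inv (sub_ne_zero.mpr hne)).smul
        (hy.sub analyticAt_const)
    exact hslope.congr (dslope_eventuallyEq_slope_of_ne f hne).symm

lemma exists_analyticAt_mul_rpow_sub_one {s : ℝ} (hs : 0 < s) :
    ∃ R : ℝ → ℝ, ∀ v > 0, AnalyticAt ℝ R v ∧ R v * (v ^ s - 1) = v - 1 := by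
  have hrpow : ∀ v > 0, AnalyticAt ℝ (fun v : ℝ ↦ v ^ s) v := fun v hv ↦
    (Real.contDiffAt_rpow_const_of_ne (n := ⊤) hv.ne').analyticAt
  set d := dslope (fun v : ℝ ↦ v ^ s) 1
  have hmul : ∀ v : ℝ, (v - 1) * d v = v ^ s - 1 := fun v ↦ by
    simpa using sub_smul_dslope (fun v : ℝ ↦ v ^ s) 1 v
  have hne : ∀ v > 0, d v ≠ 0 := fun v hv h ↦ by
    have hv1 : v = 1 := by
      refine (Real.rpow_left_inj hv.le zero_le_one hs.ne').mp ?_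
      rw [one_rpow]
      linarith [hmul v, mul_eq_zero_of_right (v - 1) h]
    rw [hv1, show d 1 = s by simp [d, dslope_same]] at h
    exact hs.ne' h
  refine ⟨fun v ↦ (d v)⁻¹, fun v hv ↦
    ⟨(analyticAt_dslope (hrpow 1 one_pos) (hrpow v hv)).inv (hne v hv), ?_⟩⟩
  rw [← hmul]
  field [hne v hv]

lemma exists_forall_abs_div_pow_le {f : ℝ → ℝ} {t₁ : ℝ} (hf : ContinuousOn f (Ioi 0)) (ha : 0 < a)
    (b : ℝ) (ht₁ : 0 < t₁) (t₂ : ℝ) (k : ℕ) :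
    ∃ D, ∀ u ∈ Icc a b, ∀ t ∈ Icc t₁ t₂, |f (u / t) / t ^ k| ≤ D := by
  have hpos : ∀ p ∈ Icc a b ×ˢ Icc t₁ t₂, 0 < p.1 ∧ 0 < p.2 := fun p hp ↦
    ⟨ha.trans_le hp.1.1, ht₁.trans_le hp.2.1⟩
  have hcont : ContinuousOn (fun p : ℝ × ℝ ↦ f (p.1 / p.2) / p.2 ^ k) (Icc a b ×ˢ Icc t₁ t₂) :=
    (hf.comp (continuousOn_fst.div continuousOn_snd fun p hp ↦ (hpos p hp).2.ne') fun p hp ↦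
      div_pos (hpos p hp).1 (hpos p hp).2).div (continuousOn_snd.pow k)
      fun p hp ↦ pow_ne_zero k (hpos p hp).2.ne'
  obtain ⟨D, hD⟩ := (isCompact_Icc.prod isCompact_Icc).exists_bound_of_continuousOn hcont
  exact ⟨D, fun u hu t ht ↦ hD (u, t) ⟨hu, ht⟩⟩

lemma hasDerivAt_integral_weight_mul_fourierChar {W : ℝ → ℝ} {Φ Φ' : ℝ → ℝ → ℝ} {t₀ : ℝ} {s : Set ℝ}
    (hab : a ≤ b) (hW : IsWeight W a b) (hs : s ∈ 𝓝 t₀) (hΦ : ∀ t, Continuous (Φ t))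
    (hΦ' : ∀ t ∈ s, ∀ u ∈ Icc a b, HasDerivAt (fun t ↦ Φ t u) (Φ' t u) t)
    (hΦ'c : ContinuousOn (fun p : ℝ × ℝ ↦ Φ' p.1 p.2) (s ×ˢ Icc a b)) :
    HasDerivAt (fun t ↦ ∫ u, (W u : ℂ) * 𝐞 (Φ t u))
      (∫ u, (W u : ℂ) * (2 * π * Complex.I * Φ' t₀ u * 𝐞 (Φ t₀ u))) t₀ := by
  obtain ⟨B, hB⟩ := hW.exists_bound
  obtain ⟨S, hS, hSs, hScomp⟩ := local_compact_nhds hs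
  obtain ⟨D, hD⟩ := (hScomp.prod isCompact_Icc).exists_bound_of_continuousOn
    (hΦ'c.mono (prod_mono_left hSs))
  have hIoc : uIoc a b ⊆ Icc a b := by rw [uIoc_of_le hab]; exact Ioc_subset_Icc_self
  have hWc : Continuous fun u ↦ (W u : ℂ) := Complex.continuous_ofReal.comp hW.contDiff.continuous
  have hcont : ∀ t, Continuous fun u ↦ (W u : ℂ) * 𝐞 (Φ t u) := fun t ↦
    hWc.mul (continuous_coe_fourierChar.comp (hΦ t))
  have hΦ₀ : ContinuousOn (Φ' t₀) (Icc a b) :=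
    hΦ'c.comp (continuousOn_const.prodMk continuousOn_id) fun _ hu ↦ ⟨mem_of_mem_nhds hs, hu⟩
  have hcont' : ContinuousOn (fun u ↦ (W u : ℂ) * (2 * π * Complex.I * Φ' t₀ u * 𝐞 (Φ t₀ u)))
      (Icc a b) :=
    hWc.continuousOn.mul ((continuousOn_const.mul
      (Complex.continuous_ofReal.comp_continuousOn hΦ₀)).mul
        (continuous_coe_fourierChar.comp (hΦ t₀)).continuousOn)
  simp only [hW.integral_mul_eq]
  refine (hasDerivAt_integral_of_dominated_loc_of_deriv_le
    (F' := fun t u ↦ (W u : ℂ) * (2 * π * Complex.I * Φ' t u * 𝐞 (Φ t u)))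
    (bound := fun _ ↦ B * (2 * π * D)) hS
    (.of_forall fun t ↦ (hcont t).aestronglyMeasurable) ((hcont t₀).intervalIntegrable _ _)
    ((hcont'.mono hIoc).aestronglyMeasurable measurableSet_uIoc)
    (.of_forall fun u hu t ht ↦ ?_) intervalIntegrable_const
    (.of_forall fun u hu t ht ↦
      (hasDerivAt_fourierChar_comp (hΦ' t (hSs ht) u (hIoc hu))).const_mul _)).2
  simp only [norm_mul, Complex.norm_real, Complex.norm_I, Complex.norm_two, Circle.norm_coe,
    mul_one, Real.norm_eq_abs, abs_of_pos pi_pos]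
  have hDt : |Φ' t u| ≤ D := hD (t, u) ⟨ht, hIoc hu⟩
  gcongr
  exacts [(abs_nonneg _).trans (hB u).1, (hB u).1]

/-- The value of `powerIntegral c W x y` for the frequency `y = c x t ^ (c - 1)`, whose phase
`x u ^ c - y u` is stationary at `u = t`, divided by the phase factor at that point. -/
noncomputable def stationaryAmplitude (c : ℝ) (W : ℝ → ℝ) (x t : ℝ) : ℂ :=
  ∫ u, (W u : ℂ) * 𝐞 (x * u ^ c - x * c * t ^ (c - 1) * u + x * (c - 1) * t ^ c)

lemma powerIntegral_eq_stationaryAmplitude (c : ℝ) (W : ℝ → ℝ) (x t : ℝ) :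
    powerIntegral c W x (x * c * t ^ (c - 1)) =
      𝐞 (-(x * (c - 1) * t ^ c)) * stationaryAmplitude c W x t := by
  rw [powerIntegral, stationaryAmplitude, ← MeasureTheory.integral_const_mul]
  congr with u
  rw [mul_left_comm, ← Circle.coe_mul, ← AddChar.map_add_eq_mul]
  congr 3
  ring

lemma hasDerivAt_stationaryPhase {R : ℝ → ℝ} {u t : ℝ} (hu : 0 < u) (ht : 0 < t)
    (hR : R (u / t) * ((u / t) ^ (c - 1) - 1) = u / t - 1) (x : ℝ) :
    HasDerivAt (fun t ↦ x * u ^ c - x * c * t ^ (c - 1) * u + x * (c - 1) * t ^ c)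
      (-(c - 1) * (R (u / t) * (x * c * u ^ (c - 1) - x * c * t ^ (c - 1)))) t := by
  have hder := (((hasDerivAt_mul_rpow (s := c - 1) (x * c) ht).mul_const u).const_sub
    (x * u ^ c)).fun_add (hasDerivAt_mul_rpow (s := c) (x * (c - 1)) ht)
  refine hder.congr_deriv ?_
  rw [Real.div_rpow hu.le ht.le] at hR
  have htc : t ^ (c - 1 - 1) * t = t ^ (c - 1) := by
    rw [← Real.rpow_add_one ht.ne', sub_add_cancel]
  have ht0 : t ^ (c - 1) ≠ 0 := (rpow_pos_of_pos ht _).ne'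
  have hR' : R (u / t) * (u ^ (c - 1) - t ^ (c - 1)) = t ^ (c - 1 - 1) * (u - t) := by
    have : R (u / t) * (u ^ (c - 1) - t ^ (c - 1)) =
      t ^ (c - 1) * (R (u / t) * (u ^ (c - 1) / t ^ (c - 1) - 1)) := by field
    rw [this, hR, ← htc]
    field
  rw [← htc] at hR' ⊢
  linear_combination (c - 1) * x * c * hR'

lemma exists_norm_stationaryAmplitude_le (hc : 1 < c) (ha : 0 < a) (hab : a ≤ b) {W : ℝ → ℝ}
    (hW : IsWeight W a b) : ∃ K > 0, ∀ x > 0, ∀ t, ‖stationaryAmplitude c W x t‖ ≤ K / √x := by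
  obtain ⟨B, hB⟩ := hW.exists_bound
  obtain ⟨K, hK0, hK⟩ := exists_norm_integral_fourierChar_rpow_le hc ha b
  have hB0 : 0 ≤ B := (abs_nonneg _).trans (hB a).1
  refine ⟨B * K * (b - a) + 1, by positivity, fun x hx t ↦ ?_⟩
  have hbound := norm_integral_mul_le_of_forall_norm_integral_le hab
    (continuous_coe_fourierChar.comp (continuous_mul_rpow_sub_mul_add (c := c) (by linarith) x
      (x * c * t ^ (c - 1)) (x * (c - 1) * t ^ c))) (fun u _ ↦ hW.hasDerivAt u)
    hW.contDiff_deriv.continuous.continuousOn (hW.eq_zero fun h ↦ h.2.false)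
    (fun u _ ↦ (hB u).2.1) (hK x hx _ _)
  rw [stationaryAmplitude, hW.integral_mul_eq]
  calc _ ≤ _ := hbound
    _ = B * K * (b - a) / √x := by ring
    _ ≤ _ := by gcongr; linarith

lemma exists_norm_integral_weight_mul_comp_div_le (hc : 1 < c) (ha : 0 < a) (hab : a ≤ b)
    {W R : ℝ → ℝ} (hW : IsWeight W a b) (hR : ∀ v > 0, AnalyticAt ℝ R v) {t₁ : ℝ} (ht₁ : 0 < t₁)
    (t₂ : ℝ) : ∃ K, ∀ x > 0, ∀ t ∈ Icc t₁ t₂,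
      ‖∫ u, (W u : ℂ) * ((R (u / t) * (x * c * u ^ (c - 1) - x * c * t ^ (c - 1)) : ℝ) *
        𝐞 (x * u ^ c - x * c * t ^ (c - 1) * u + x * (c - 1) * t ^ c))‖ ≤ K / √x := by
  obtain ⟨B, hB⟩ := hW.exists_bound
  obtain ⟨K, _, hK⟩ := exists_norm_integral_fourierChar_rpow_le hc ha b
  have hcont : ∀ {f : ℝ → ℝ}, (∀ v > 0, AnalyticAt ℝ f v) → ContinuousOn f (Ioi 0) :=
    fun hf v hv ↦ (hf v hv).continuousAt.continuousWithinAt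
  have hR' := fun v hv ↦ (hR v hv).deriv
  have hR'' := fun v hv ↦ (hR' v hv).deriv
  obtain ⟨D₀, hD₀⟩ := exists_forall_abs_div_pow_le (hcont hR) ha b ht₁ t₂ 0
  obtain ⟨D₁, hD₁⟩ := exists_forall_abs_div_pow_le (hcont hR') ha b ht₁ t₂ 1
  obtain ⟨D₂, hD₂⟩ := exists_forall_abs_div_pow_le (hcont hR'') ha b ht₁ t₂ 2
  refine ⟨4 * B * max D₀ (max D₁ D₂) * K * (b - a), fun x hx t ht ↦ ?_⟩
  have ht0 := ht₁.trans_le ht.1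
  have hpos : ∀ u ∈ Icc a b, 0 < u := fun u hu ↦ ha.trans_le hu.1
  have hdiv : ∀ {f : ℝ → ℝ}, (∀ v > 0, AnalyticAt ℝ f v) → ∀ u ∈ Icc a b, ∀ k : ℕ,
      HasDerivAt (fun u ↦ f (u / t) / t ^ k) (deriv f (u / t) / t ^ (k + 1)) u := fun hf u hu k ↦
    (((hf _ (div_pos (hpos u hu) ht0)).differentiableAt.hasDerivAt.comp u
      ((hasDerivAt_id u).div_const t)).div_const (t ^ k)).congr_deriv (by field)
  calc _ ≤ 4 * B * max D₀ (max D₁ D₂) * (K / √x) * (b - a) := by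
        refine norm_integral_weight_mul_deriv_mul_fourierChar_le (p := fun u ↦ R (u / t)) hab hW hB
          (continuous_mul_rpow_sub_mul_add (by linarith) _ _ _)
          (fun u hu ↦ hasDerivAt_mul_rpow_sub_mul_add _ _ _ (hpos u hu))
          ((continuousOn_const.mul (continuousOn_rpow_Icc ha _)).sub continuousOn_const)
          (fun u hu ↦ by simpa using hdiv hR u hu 0) (fun u hu ↦ by simpa using hdiv hR' u hu 1)
          (fun u hu ↦ ?_) (fun u hu ↦ ⟨?_, ?_, ?_⟩) (hK x hx _ _)
        · exact (hdiv hR'' u hu 2).continuousAt.continuousWithinAt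
        · have hD := hD₀ u hu t ht
          rw [pow_zero, div_one] at hD
          exact hD.trans (le_max_left _ _)
        · have hD := hD₁ u hu t ht
          rw [pow_one] at hD
          exact hD.trans (le_max_of_le_right (le_max_left _ _))
        · exact (hD₂ u hu t ht).trans (le_max_of_le_right (le_max_right _ _))
    _ = _ := by ring

lemma exists_norm_stationaryAmplitude_sub_le (hc : 1 < c) (ha : 0 < a) (hab : a ≤ b) {W : ℝ → ℝ}
    (hW : IsWeight W a b) {t₁ : ℝ} (ht₁ : 0 < t₁) (t₂ : ℝ) :
    ∃ K, ∀ x > 0, ∀ t ∈ Icc t₁ t₂, ∀ t' ∈ Icc t₁ t₂,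
      ‖stationaryAmplitude c W x t' - stationaryAmplitude c W x t‖ ≤ K / √x * |t' - t| := by
  obtain ⟨R, hR⟩ := exists_analyticAt_mul_rpow_sub_one (sub_pos.mpr hc)
  obtain ⟨K, hK⟩ := exists_norm_integral_weight_mul_comp_div_le hc ha hab hW
    (fun v hv ↦ (hR v hv).1) ht₁ t₂
  refine ⟨2 * π * (c - 1) * K, fun x hx t ht t' ht' ↦
    (convex_Icc t₁ t₂).norm_image_sub_le_of_norm_hasDerivWithin_le (f := stationaryAmplitude c W x)
      (fun τ hτ ↦ (hasDerivAt_integral_weight_mul_fourierChar hab hW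
        (Ioi_mem_nhds (ht₁.trans_le hτ.1))
        (fun t ↦ continuous_mul_rpow_sub_mul_add (by linarith) _ _ _)
        (fun t ht u hu ↦ hasDerivAt_stationaryPhase (ha.trans_le hu.1) ht
          (hR _ (div_pos (ha.trans_le hu.1) ht)).2 x) ?_).hasDerivWithinAt) (fun τ hτ ↦ ?_) ht ht'⟩
  · have hRc : ContinuousOn R (Ioi 0) := fun v hv ↦ (hR v hv).1.continuousAt.continuousWithinAt
    have hpow : ContinuousOn (fun v : ℝ ↦ v ^ (c - 1)) (Ioi 0) := fun v hv ↦
      (Real.continuousAt_rpow_const _ _ (.inl (ne_of_gt hv))).continuousWithinAt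
    have hpos : ∀ p ∈ Ioi (0 : ℝ) ×ˢ Icc a b, 0 < p.1 ∧ 0 < p.2 := fun p hp ↦
      ⟨hp.1, ha.trans_le hp.2.1⟩
    exact continuousOn_const.mul ((hRc.comp (continuousOn_snd.div continuousOn_fst fun p hp ↦
      (hpos p hp).1.ne') fun p hp ↦ div_pos (hpos p hp).2 (hpos p hp).1).mul
        ((continuousOn_const.mul (hpow.comp continuousOn_snd fun p hp ↦ (hpos p hp).2)).sub
          (continuousOn_const.mul (hpow.comp continuousOn_fst fun p hp ↦ (hpos p hp).1))))
  · have hfactor : ∀ u, (W u : ℂ) * (2 * π * Complex.I *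
        ((-(c - 1) * (R (u / τ) * (x * c * u ^ (c - 1) - x * c * τ ^ (c - 1))) : ℝ) : ℂ) *
          𝐞 (x * u ^ c - x * c * τ ^ (c - 1) * u + x * (c - 1) * τ ^ c)) =
        (2 * π * Complex.I * (-(c - 1) : ℝ)) * ((W u : ℂ) *
          ((R (u / τ) * (x * c * u ^ (c - 1) - x * c * τ ^ (c - 1)) : ℝ) *
            𝐞 (x * u ^ c - x * c * τ ^ (c - 1) * u + x * (c - 1) * τ ^ c))) := fun u ↦ by
      push_cast
      ring
    have hconst : ‖(2 * π * Complex.I * (-(c - 1) : ℝ) : ℂ)‖ = 2 * π * (c - 1) := by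
      simp only [norm_mul, Complex.norm_real, Complex.norm_I, Complex.norm_two, mul_one,
        Real.norm_eq_abs, abs_neg, abs_of_pos pi_pos, abs_of_pos (sub_pos.mpr hc)]
    simp only [hfactor]
    rw [MeasureTheory.integral_const_mul, norm_mul, hconst, mul_div_assoc]
    exact mul_le_mul_of_nonneg_left (hK x hx τ hτ)
      (mul_nonneg two_pi_pos.le (sub_nonneg.mpr hc.le))

end StationaryPhase

section Poisson

open Real Set MeasureTheory Filter Topology
open scoped FourierTransform

variable {a b c : ℝ}

/-- The natural numbers `n` with `a M ≤ n ≤ b M`. -/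
noncomputable def natIcc (a b M : ℝ) : Finset ℕ := Finset.Icc ⌈a * M⌉₊ ⌊b * M⌋₊

lemma mem_natIcc {M : ℝ} (hbM : 0 ≤ b * M) {n : ℕ} : n ∈ natIcc a b M ↔ a * M ≤ n ∧ n ≤ b * M := by
  rw [natIcc, Finset.mem_Icc, Nat.ceil_le, Nat.le_floor_iff hbM]

lemma mem_map_natIcc {M : ℝ} (haM : 0 ≤ a * M) {n : ℤ} (hn : a * M ≤ n ∧ n ≤ b * M) :
    n ∈ (natIcc a b M).map Nat.castEmbedding := by
  lift n to ℕ using by exact_mod_cast haM.trans hn.1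
  rw [Int.cast_natCast] at hn
  exact Finset.mem_map_of_mem _ ((mem_natIcc (n.cast_nonneg.trans hn.2)).mpr hn)

/-- The smoothed exponential sum `∑ W(n / M) e(x (n / M) ^ c)`, for `W` supported in `(a, b)`. -/
noncomputable def powerSum (c : ℝ) (W : ℝ → ℝ) (a b M x : ℝ) : ℂ :=
  expSum (natIcc a b M) (fun n ↦ W (n / M)) (fun n ↦ (n / M : ℝ) ^ c) x

lemma fourier_weight_mul_fourierChar_rpow (c : ℝ) (W : ℝ → ℝ) {M : ℝ} (hM : 0 < M) (x y : ℝ) :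
    𝓕 (fun u : ℝ ↦ (W (u / M) : ℂ) * 𝐞 (x * (u / M) ^ c)) y = M * powerIntegral c W x (y * M) := by
  have hscale := Measure.integral_comp_div
    (fun u : ℝ ↦ (W u : ℂ) * 𝐞 (x * u ^ c - y * M * u)) M
  rw [abs_of_pos hM, Complex.real_smul] at hscale
  rw [Real.fourier_real_eq, powerIntegral, ← hscale]
  congr with u
  rw [Circle.smul_def, smul_eq_mul, mul_left_comm, ← Circle.coe_mul, ← AddChar.map_add_eq_mul]
  congr 3
  field

lemma powerSum_eq_tsum (hc : 0 ≤ c) (ha : 0 < a) {W : ℝ → ℝ} (hW : IsWeight W a b) {M : ℝ}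
    (hM : 0 < M) {x : ℝ} (hs : Summable fun l : ℤ ↦ powerIntegral c W x (l * M)) :
    powerSum c W a b M x = M * ∑' l : ℤ, powerIntegral c W x (l * M) := by
  set f : ℝ → ℂ := fun u ↦ (W (u / M) : ℂ) * 𝐞 (x * (u / M) ^ c)
  have hf : Continuous f := by
    have hpow : Continuous fun u : ℝ ↦ x * (u / M) ^ c :=
      continuous_const.mul ((Real.continuous_rpow_const hc).comp (continuous_id.div_const M))
    exact (Complex.continuous_ofReal.comp (hW.contDiff.continuous.comp
      (continuous_id.div_const M))).mul (continuous_coe_fourierChar.comp hpow)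
  have hf0 : ∀ u ∉ Icc (a * M) (b * M), f u = 0 := fun u hu ↦ by
    have hWu : W (u / M) = 0 := hW.eq_zero fun h ↦
      hu ⟨((lt_div_iff₀ hM).mp h.1).le, ((div_lt_iff₀ hM).mp h.2).le⟩
    simp only [f, hWu, Complex.ofReal_zero, zero_mul]
  have hdecay : f =O[cocompact ℝ] (fun u : ℝ ↦ |u| ^ (-2 : ℝ)) :=
    (Asymptotics.isBigO_zero _ _).congr' (mem_of_superset isCompact_Icc.compl_mem_cocompact
      fun u hu ↦ (hf0 u hu).symm) .rfl
  have hF : ∀ l : ℤ, 𝓕 f l = M * powerIntegral c W x (l * M) := fun l ↦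
    fourier_weight_mul_fourierChar_rpow c W hM x l
  have hpoisson : ∑' n : ℤ, f n = ∑' l : ℤ, M * powerIntegral c W x (l * M) := by
    simpa [hF] using Real.tsum_eq_tsum_fourier_of_rpow_decay_of_summable hf one_lt_two hdecay
      (by simpa only [hF] using hs.mul_left _) 0
  have hfinite : ∀ n : ℤ, n ∉ (natIcc a b M).map Nat.castEmbedding → f n = 0 := fun n hn ↦
    hf0 n fun h ↦ hn (mem_map_natIcc (by positivity) h)
  rw [← tsum_mul_left, ← hpoisson, tsum_eq_sum hfinite, Finset.sum_map]
  simp only [powerSum, expSum, f, Nat.castEmbedding_apply, Int.cast_natCast]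

lemma summable_and_norm_tsum_sub_sum_le {ι E : Type*} [NormedAddCommGroup E] [CompleteSpace E]
    {g : ι → E} {h : ι → ℝ} {s : Finset ι} (hh : Summable h) (h0 : ∀ i, 0 ≤ h i)
    (hgh : ∀ i ∉ s, ‖g i‖ ≤ h i) : Summable g ∧ ‖∑' i, g i - ∑ i ∈ s, g i‖ ≤ ∑' i, h i := by
  have hg : Summable g := hh.of_norm_bounded_eventually
    (s.finite_toSet.subset fun i hi ↦ by_contra fun his ↦ hi (hgh i his))
  refine ⟨hg, ?_⟩
  rw [← hg.sum_add_tsum_subtype_compl s, add_sub_cancel_left]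
  exact (tsum_of_norm_bounded (hh.subtype _).hasSum fun i ↦ hgh i i.2).trans
    (hh.tsum_subtype_le _ _ h0)

lemma inv_add_abs_mul_sq_le {T M : ℝ} (hT : 1 ≤ T) (hM : 1 ≤ M) (l : ℤ) :
    1 / (T + |l * M|) ^ 2 ≤ (if l = 0 then 1 / T else 0) + 1 / M * (1 / (l : ℝ) ^ 2) := by
  rcases eq_or_ne l 0 with rfl | hl
  · simp only [Int.cast_zero, zero_mul, abs_zero, add_zero, if_true, ne_eq, OfNat.ofNat_ne_zero,
      not_false_eq_true, zero_pow, div_zero, mul_zero]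
    exact one_div_le_one_div_of_le (by positivity) (le_self_pow₀ hT two_ne_zero)
  · have hl2 : 0 < (l : ℝ) ^ 2 := by positivity
    rw [if_neg hl, zero_add, one_div_mul_one_div]
    refine one_div_le_one_div_of_le (mul_pos (by positivity) hl2) ?_
    calc M * (l : ℝ) ^ 2 ≤ M ^ 2 * (l : ℝ) ^ 2 := by gcongr; exact le_self_pow₀ hM two_ne_zero
      _ = |l * M| ^ 2 := by rw [sq_abs]; ring
      _ ≤ _ := by gcongr; linarith

lemma exists_norm_powerIntegral_intCast_mul_le (hc : 1 < c) (ha : 0 < a) (hab : a ≤ b)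
    {W : ℝ → ℝ} (hW : IsWeight W a b) :
    ∃ K > 0, ∀ T ≥ 1, ∀ M ≥ 1, ∀ x ∈ Icc T (2 * T), ∀ l : ℤ,
      l ∉ (natIcc (c * a ^ (c - 1) / 2) (4 * c * b ^ (c - 1)) (T / M)).map Nat.castEmbedding →
      ‖powerIntegral c W x (l * M)‖ ≤
        K * ((if l = 0 then 1 / T else 0) + 1 / M * (1 / (l : ℝ) ^ 2)) := by
  obtain ⟨K, hK0, hK⟩ := exists_norm_powerIntegral_le hc ha hab hW
  refine ⟨K, hK0, fun T hT M hM x hx l hl ↦ ?_⟩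
  have hb : 0 < b := ha.trans_le hab
  have hx0 : 0 < x := by linarith [hx.1]
  have hout : l * M < c * a ^ (c - 1) / 2 * T ∨ 4 * c * b ^ (c - 1) * T < l * M := by
    by_contra! h
    refine hl (mem_map_natIcc (by positivity) ?_)
    rwa [mul_div_assoc', mul_div_assoc', div_le_iff₀ (by positivity), le_div_iff₀ (by positivity)]
  calc _ ≤ K / (x + |l * M|) ^ 2 := hK x hx0 _ (hout.imp
        (fun h ↦ h.le.trans (mul_le_mul_of_nonneg_left hx.1 (by positivity)))
        fun h ↦ le_trans (by
          calc 2 * c * b ^ (c - 1) * x ≤ 2 * c * b ^ (c - 1) * (2 * T) := by gcongr; exact hx.2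
            _ = 4 * c * b ^ (c - 1) * T := by ring) h.le)
    _ ≤ K / (T + |l * M|) ^ 2 := by gcongr; exact hx.1
    _ ≤ _ := by rw [← mul_one_div]; gcongr; exact inv_add_abs_mul_sq_le hT hM l

lemma exists_norm_powerSum_sub_le (hc : 1 < c) (ha : 0 < a) (hab : a ≤ b) {W : ℝ → ℝ}
    (hW : IsWeight W a b) :
    ∃ K > 0, ∀ T ≥ 1, ∀ M ≥ 1, ∀ x ∈ Icc T (2 * T),
      ‖powerSum c W a b M x - M * ∑ l ∈ natIcc (c * a ^ (c - 1) / 2) (4 * c * b ^ (c - 1)) (T / M),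
        powerIntegral c W x (l * M)‖ ≤ K * (M / T + 1) := by
  obtain ⟨K, hK0, htail⟩ := exists_norm_powerIntegral_intCast_mul_le hc ha hab hW
  set Z := ∑' l : ℤ, 1 / (l : ℝ) ^ 2
  have hZ : Summable fun l : ℤ ↦ 1 / (l : ℝ) ^ 2 := Real.summable_one_div_int_pow.mpr one_lt_two
  have hZ0 : 0 ≤ Z := tsum_nonneg fun l ↦ by positivity
  refine ⟨K * (1 + Z), by positivity, fun T hT M hM x hx ↦ ?_⟩
  have hM0 : 0 < M := by linarith
  have hmaj := (((hasSum_ite_eq (0 : ℤ) (1 / T)).add (hZ.hasSum.mul_left (1 / M))).mul_left K)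
  obtain ⟨hsum, hle⟩ := summable_and_norm_tsum_sub_sum_le hmaj.summable
    (fun l ↦ by positivity) (htail T hT M hM x hx)
  rw [Finset.sum_map, hmaj.tsum_eq] at hle
  simp only [Nat.castEmbedding_apply, Int.cast_natCast] at hle
  rw [powerSum_eq_tsum (by linarith) ha hW hM0 hsum, ← mul_sub, norm_mul, Complex.norm_real,
    Real.norm_of_nonneg hM0.le]
  calc _ ≤ M * (K * (1 / T + 1 / M * Z)) := by gcongr
    _ = K * (M / T + Z) := by field
    _ ≤ K * ((1 + Z) * (M / T) + (1 + Z) * 1) := by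
        gcongr
        · exact le_mul_of_one_le_left (by positivity) (by linarith)
        · linarith
    _ = _ := by ring

end Poisson

section AbelSummation

lemma sum_Icc_mul_eq {R : Type*} [CommRing R] (A e : ℕ → R) {p q : ℕ} (hpq : p ≤ q) :
    ∑ l ∈ Finset.Icc p q, A l * e l = A q * ∑ l ∈ Finset.Icc p q, e l -
      ∑ k ∈ Finset.Ico p q, (A (k + 1) - A k) * ∑ l ∈ Finset.Icc p k, e l := by
  induction q, hpq using Nat.le_induction with
  | base => simp
  | succ n hn ih =>
    rw [Finset.sum_Icc_succ_top (by omega), Finset.sum_Icc_succ_top (by omega), ih,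
      Finset.sum_Ico_succ_top hn]
    ring

lemma add_pow_four_le {x y : ℝ} (hx : 0 ≤ x) (hy : 0 ≤ y) : (x + y) ^ 4 ≤ 8 * (x ^ 4 + y ^ 4) := by
  simpa only [show (4 - 1 : ℕ) = 3 from rfl, show (2 : ℝ) ^ 3 = 8 by norm_num] using
    add_pow_le hx hy 4

lemma norm_sum_Icc_mul_pow_four_le {A e : ℕ → ℂ} {p q : ℕ} {α δ : ℝ} (hδ : 0 ≤ δ)
    (hA : ∀ l ∈ Finset.Icc p q, ‖A l‖ ≤ α) (hd : ∀ k ∈ Finset.Ico p q, ‖A (k + 1) - A k‖ ≤ δ) :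
    ‖∑ l ∈ Finset.Icc p q, A l * e l‖ ^ 4 ≤ 8 * (α ^ 4 * ‖∑ l ∈ Finset.Icc p q, e l‖ ^ 4 +
      δ ^ 4 * (q : ℝ) ^ 3 * ∑ k ∈ Finset.Ico p q, ‖∑ l ∈ Finset.Icc p k, e l‖ ^ 4) := by
  rcases lt_or_ge q p with hqp | hpq
  · simp [Finset.Icc_eq_empty_of_lt hqp, Finset.Ico_eq_empty_of_le hqp.le]
  have hq : q ∈ Finset.Icc p q := Finset.right_mem_Icc.mpr hpq
  have hα : 0 ≤ α := (norm_nonneg _).trans (hA q hq)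
  set P := fun k ↦ ∑ l ∈ Finset.Icc p k, e l
  have hsum : ‖∑ l ∈ Finset.Icc p q, A l * e l‖ ≤
      α * ‖P q‖ + δ * ∑ k ∈ Finset.Ico p q, ‖P k‖ := by
    rw [sum_Icc_mul_eq A e hpq, Finset.mul_sum _ _ δ]
    refine (norm_sub_le _ _).trans (add_le_add ?_ ((norm_sum_le _ _).trans
      (Finset.sum_le_sum fun k hk ↦ ?_)))
    · rw [norm_mul]; gcongr; exact hA q hq
    · rw [norm_mul]; gcongr; exact hd k hk
  have hpow : (∑ k ∈ Finset.Ico p q, ‖P k‖) ^ 4 ≤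
      (q : ℝ) ^ 3 * ∑ k ∈ Finset.Ico p q, ‖P k‖ ^ 4 := by
    refine (pow_sum_le_card_mul_sum_pow (fun k _ ↦ norm_nonneg (P k)) 3).trans ?_
    gcongr
    rw [Nat.card_Ico]
    exact q.sub_le p
  calc _ ≤ (α * ‖P q‖ + δ * ∑ k ∈ Finset.Ico p q, ‖P k‖) ^ 4 := by gcongr
    _ ≤ 8 * ((α * ‖P q‖) ^ 4 + (δ * ∑ k ∈ Finset.Ico p q, ‖P k‖) ^ 4) :=
        add_pow_four_le (by positivity) (by positivity)
    _ ≤ 8 * (α ^ 4 * ‖P q‖ ^ 4 + δ ^ 4 * ((q : ℝ) ^ 3 * ∑ k ∈ Finset.Ico p q, ‖P k‖ ^ 4)) := by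
        rw [mul_pow, mul_pow]; gcongr
    _ = _ := by ring

end AbelSummation

section DualSum

open Real Set MeasureTheory
open scoped FourierTransform

variable {a b c β : ℝ} {W : ℝ → ℝ}

/-- The estimate `M ^ β + M ^ 4 * δ` for the `δ`-approximate additive energy of the normalised
`c`-th powers `(n / M) ^ c`, uniformly in `M` and `δ`, on every fixed range `a M ≤ n ≤ b M`. -/
def PowerEnergyBound (c β : ℝ) : Prop :=
  ∀ a b : ℝ, 0 < a → a < b → ∃ C > 0, ∀ M > 0, ∀ δ > 0,
    (approxEnergy (fun n : ℕ ↦ (n / M : ℝ) ^ c) (natIcc a b M) δ : ℝ) ≤ C * (M ^ β + M ^ 4 * δ)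

/-- The critical point on `u > 0` of the phase `x u ^ c - y u`. -/
noncomputable def stationaryPoint (c x y : ℝ) : ℝ := (y / (c * x)) ^ (1 / (c - 1))

lemma mul_stationaryPoint_rpow_sub_one (hc : 1 < c) {x y : ℝ} (hx : 0 < x) (hy : 0 ≤ y) :
    x * c * stationaryPoint c x y ^ (c - 1) = y := by
  rw [stationaryPoint, ← rpow_mul (by positivity), one_div_mul_cancel (sub_pos.mpr hc).ne',
    rpow_one]
  field

/-- The constant in front of the dual phase `ν ^ (c / (c - 1))` produced by stationary phase. -/
noncomputable def dualCoeff (c : ℝ) : ℝ := (c - 1) * c ^ (-(c / (c - 1)))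

lemma dualCoeff_pos (hc : 1 < c) : 0 < dualCoeff c :=
  mul_pos (sub_pos.mpr hc) (rpow_pos_of_pos (by linarith) _)

lemma mul_stationaryPoint_rpow (hc : 1 < c) {x T M l : ℝ} (hx : 0 < x) (hT : 0 < T) (hM : 0 < M)
    (hl : 0 ≤ l) : x * (c - 1) * stationaryPoint c x (l * M) ^ c =
      (x / T) ^ (-(1 / (c - 1))) * (dualCoeff c * T) * (l / (T / M)) ^ (c / (c - 1)) := by
  have hc₁ : c - 1 ≠ 0 := (sub_pos.mpr hc).ne'
  have hexp : -(1 / (c - 1)) = 1 + -(c / (c - 1)) := by field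
  have hbase : l * M / (c * x) = (x / T)⁻¹ * c⁻¹ * (l / (T / M)) := by field
  rw [stationaryPoint, ← rpow_mul (by positivity), one_div_mul_eq_div, hbase, dualCoeff, hexp,
    mul_rpow (by positivity) (by positivity), mul_rpow (by positivity) (by positivity),
    inv_rpow (by positivity), inv_rpow (by positivity), ← rpow_neg (by positivity),
    ← rpow_neg (by positivity), rpow_add (by positivity), rpow_one]
  field

lemma powerIntegral_eq_stationaryAmplitude_stationaryPoint (hc : 1 < c) (W : ℝ → ℝ) {x T M l : ℝ}
    (hx : 0 < x) (hT : 0 < T) (hM : 0 < M) (hl : 0 ≤ l) : powerIntegral c W x (l * M) =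
      stationaryAmplitude c W x (stationaryPoint c x (l * M)) *
        𝐞 (-((x / T) ^ (-(1 / (c - 1))) * (dualCoeff c * T)) * (l / (T / M)) ^ (c / (c - 1))) := by
  rw [neg_mul, ← mul_stationaryPoint_rpow hc hx hT hM hl, mul_comm (stationaryAmplitude _ _ _ _),
    ← powerIntegral_eq_stationaryAmplitude, mul_stationaryPoint_rpow_sub_one hc hx (by positivity)]

/-- The exponential sum over the frequencies `l ∈ s` into which Poisson summation and stationary
phase transform `powerSum c W a b M x` for `x ∈ [T, 2 T]`; here `L = T / M`. -/
noncomputable def dualSum (c : ℝ) (s : Finset ℕ) (T L x : ℝ) : ℂ :=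
  expSum s (fun _ ↦ 1) (fun l ↦ (l / L : ℝ) ^ (c / (c - 1)))
    (-((x / T) ^ (-(1 / (c - 1))) * (dualCoeff c * T)))

lemma continuousOn_dualSum (c : ℝ) (s : Finset ℕ) {T : ℝ} (hT : 0 < T) (L : ℝ) :
    ContinuousOn (dualSum c s T L) (Icc T (2 * T)) := by
  refine continuous_expSum.comp_continuousOn ((ContinuousOn.mul ?_ continuousOn_const).neg)
  exact (continuousOn_id.div_const T).rpow_const fun x hx ↦
    .inl (div_pos (hT.trans_le hx.1) hT).ne'

lemma exists_abs_rpow_sub_rpow_le (ha : 0 < a) (b s : ℝ) :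
    ∃ K, ∀ z ∈ Icc a b, ∀ z' ∈ Icc a b, |z ^ s - z' ^ s| ≤ K * |z - z'| := by
  have hne : ∀ z ∈ Icc a b, z ≠ 0 := fun z hz ↦ (ha.trans_le hz.1).ne'
  obtain ⟨K, hK⟩ := isCompact_Icc.exists_bound_of_continuousOn
    (f := fun z : ℝ ↦ s * z ^ (s - 1)) (s := Icc a b)
    (continuousOn_const.mul (continuousOn_id.rpow_const fun z hz ↦ .inl (hne z hz)))
  exact ⟨K, fun z hz z' hz' ↦ (convex_Icc a b).norm_image_sub_le_of_norm_hasDerivWithin_le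
    (fun w hw ↦ (hasDerivAt_rpow_const (.inl (hne w hw))).hasDerivWithinAt) hK hz' hz⟩

lemma integral_comp_rpow_neg_le {s : ℝ} (hs : 0 < s) {G : ℝ → ℝ} (hG : Continuous G)
    (hG0 : ∀ v, 0 ≤ G v) :
    ∫ u in (1 : ℝ)..2, G (u ^ (-s)) ≤ 2 ^ (s + 1) / s * ∫ v in 0..1, G v := by
  have hpos : ∀ u ∈ uIcc (1 : ℝ) 2, 0 < u := fun u hu ↦ by
    rw [uIcc_of_le one_le_two] at hu; exact one_pos.trans_le hu.1
  have hpow : ∀ r : ℝ, ContinuousOn (fun u : ℝ ↦ u ^ r) (uIcc 1 2) := fun r ↦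
    continuousOn_id.rpow_const fun u hu ↦ .inl (hpos u hu).ne'
  have hsubst : ∫ u in (1 : ℝ)..2, G (u ^ (-s)) * (-s * u ^ (-s - 1)) =
      ∫ v in (1 : ℝ)..2 ^ (-s), G v := by
    have h := intervalIntegral.integral_comp_mul_deriv' (g := G)
      (fun u hu ↦ hasDerivAt_rpow_const (p := -s) (.inl (hpos u hu).ne'))
      (continuousOn_const.mul (hpow (-s - 1))) hG.continuousOn
    simpa only [one_rpow, Function.comp_apply] using h
  have hle : ∀ u ∈ Icc (1 : ℝ) 2,
      G (u ^ (-s)) ≤ 2 ^ (s + 1) / s * -(G (u ^ (-s)) * (-s * u ^ (-s - 1))) := fun u hu ↦ by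
    have hu : 1 ≤ 2 ^ (s + 1) * u ^ (-s - 1) := by
      rw [← neg_add', rpow_neg (by linarith [hu.1]), ← div_eq_mul_inv, one_le_div₀
        (rpow_pos_of_pos (by linarith [hu.1]) _)]
      exact rpow_le_rpow (by linarith [hu.1]) hu.2 (by linarith)
    calc G (u ^ (-s)) ≤ G (u ^ (-s)) * (2 ^ (s + 1) * u ^ (-s - 1)) :=
          le_mul_of_one_le_right (hG0 _) hu
      _ = _ := by field
  calc ∫ u in (1 : ℝ)..2, G (u ^ (-s)) ≤ 2 ^ (s + 1) / s * ∫ v in 2 ^ (-s)..1, G v := by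
        rw [intervalIntegral.integral_symm 1, ← hsubst, ← intervalIntegral.integral_neg,
          ← intervalIntegral.integral_const_mul]
        refine intervalIntegral.integral_mono_on one_le_two
          (hG.comp_continuousOn (hpow _)).intervalIntegrable
          (ContinuousOn.intervalIntegrable ?_) hle
        exact continuousOn_const.mul ((hG.comp_continuousOn (hpow _)).mul
          (continuousOn_const.mul (hpow _))).neg
    _ ≤ 2 ^ (s + 1) / s * ∫ v in 0..1, G v := by
        gcongr
        exact intervalIntegral.integral_mono_interval (by positivity)
          (rpow_le_one_of_one_le_of_nonpos one_le_two (by linarith)) le_rfl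
          (.of_forall hG0) (hG.intervalIntegrable _ _)

lemma exists_integral_norm_dualSum_pow_four_le (hc : 1 < c)
    (h : PowerEnergyBound (c / (c - 1)) β) (ha : 0 < a) (hab : a < b) :
    ∃ C > 0, ∀ T > 0, ∀ L > 0, ∀ s ⊆ natIcc a b L,
      ∫ x in T..2 * T, ‖dualSum c s T L x‖ ^ 4 ≤ C * (T * L ^ β + L ^ 4) := by
  have hs : 0 < 1 / (c - 1) := one_div_pos.mpr (sub_pos.mpr hc)
  have hκ := dualCoeff_pos hc
  obtain ⟨C, hC, hE⟩ := h a b ha hab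
  set κ := dualCoeff c
  set D := 2 ^ (1 / (c - 1) + 1) / (1 / (c - 1))
  refine ⟨D * (exp π * (2 * C + 4 * C / κ)), by positivity, fun T hT L hL s hsub ↦ ?_⟩
  set ω : ℕ → ℝ := fun l ↦ (l / L : ℝ) ^ (c / (c - 1))
  set G : ℝ → ℝ := fun v ↦ ‖expSum s (fun _ ↦ 1) ω (v * (κ * T))‖ ^ 4
  have hG : Continuous G := (continuous_expSum.comp (continuous_mul_const _)).norm.pow 4
  have hmoment : ∫ v in 0..1, G v ≤ exp π * (2 * (C * L ^ β) + 4 * (C * L ^ 4 / (κ * T))) :=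
    integral_norm_expSum_pow_four_le (by positivity) fun δ hδ ↦ by
      refine (Nat.cast_le.mpr (approxEnergy_mono hsub le_rfl)).trans ((hE L hL δ hδ).trans_eq ?_)
      ring
  simp only [dualSum, norm_expSum_neg]
  calc ∫ x in T..2 * T, G ((x / T) ^ (-(1 / (c - 1))))
      = T * ∫ u in (1 : ℝ)..2, G (u ^ (-(1 / (c - 1)))) := by
        rw [intervalIntegral.integral_comp_div (fun u ↦ G (u ^ (-(1 / (c - 1))))) hT.ne',
          div_self hT.ne', mul_div_cancel_right₀ _ hT.ne', smul_eq_mul]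
    _ ≤ T * (D * (exp π * (2 * (C * L ^ β) + 4 * (C * L ^ 4 / (κ * T))))) := by
        gcongr
        refine (integral_comp_rpow_neg_le hs hG fun v ↦ by positivity).trans ?_
        gcongr
    _ = D * (exp π * (2 * C * (T * L ^ β) + 4 * C / κ * L ^ 4)) := by field
    _ ≤ D * (exp π * (2 * C * (T * L ^ β + L ^ 4) + 4 * C / κ * (T * L ^ β + L ^ 4))) := by
        gcongr
        · exact le_add_of_nonneg_right (by positivity)
        · exact le_add_of_nonneg_left (by positivity)
    _ = _ := by ring

end DualSum

section DyadicBlock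

open Real Set MeasureTheory
open scoped FourierTransform

variable {a b c β C₁ C₂ : ℝ} {W : ℝ → ℝ}

lemma exists_norm_stationaryAmplitude_stationaryPoint_sub_le (hc : 1 < c) (ha : 0 < a)
    (hab : a ≤ b) (hW : IsWeight W a b) (hC₁ : 0 < C₁) (C₂ : ℝ) :
    ∃ K, ∀ T > 0, ∀ x ∈ Icc T (2 * T),
      ∀ y ∈ Icc (C₁ * T) (C₂ * T), ∀ y' ∈ Icc (C₁ * T) (C₂ * T),
        ‖stationaryAmplitude c W x (stationaryPoint c x y') -
          stationaryAmplitude c W x (stationaryPoint c x y)‖ ≤ K / √T * (|y' - y| / T) := by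
  set s := 1 / (c - 1)
  have hs : 0 < s := one_div_pos.mpr (sub_pos.mpr hc)
  have hz₁ : 0 < C₁ / (2 * c) := by positivity
  obtain ⟨K₁, hK₁⟩ := exists_abs_rpow_sub_rpow_le hz₁ (C₂ / c) s
  obtain ⟨K₂, hK₂⟩ := exists_norm_stationaryAmplitude_sub_le hc ha hab hW
    (rpow_pos_of_pos hz₁ s) ((C₂ / c) ^ s)
  refine ⟨|K₂| * (|K₁| / c), fun T hT x hx y hy y' hy' ↦ ?_⟩
  have hx0 : 0 < x := hT.trans_le hx.1
  have hbase : ∀ w ∈ Icc (C₁ * T) (C₂ * T),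
      w / (c * x) ∈ Icc (C₁ / (2 * c)) (C₂ / c) := fun w hw ↦ by
    have hw0 : 0 ≤ w := (by positivity : 0 ≤ C₁ * T).trans hw.1
    refine ⟨?_, ?_⟩
    · rw [div_le_div_iff₀ (by positivity) (by positivity)]
      nlinarith [mul_le_mul_of_nonneg_left hx.2 (by positivity : 0 ≤ C₁ * c),
        mul_le_mul_of_nonneg_left hw.1 (by positivity : 0 ≤ 2 * c)]
    · rw [div_le_div_iff₀ (by positivity) (by positivity)]
      have hC₂ : 0 ≤ C₂ := nonneg_of_mul_nonneg_left (hw0.trans hw.2) hT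
      nlinarith [mul_le_mul_of_nonneg_left hx.1 (by positivity : 0 ≤ C₂ * c),
        mul_le_mul_of_nonneg_left hw.2 (by positivity : 0 ≤ c)]
  have hpoint : ∀ w ∈ Icc (C₁ * T) (C₂ * T),
      stationaryPoint c x w ∈ Icc ((C₁ / (2 * c)) ^ s) ((C₂ / c) ^ s) := fun w hw ↦
    ⟨rpow_le_rpow hz₁.le (hbase w hw).1 hs.le,
      rpow_le_rpow (hz₁.le.trans (hbase w hw).1) (hbase w hw).2 hs.le⟩
  have hdist : |stationaryPoint c x y' - stationaryPoint c x y| ≤ |K₁| * (|y' - y| / (c * T)) := by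
    calc _ ≤ K₁ * |y' / (c * x) - y / (c * x)| := hK₁ _ (hbase y' hy') _ (hbase y hy)
      _ ≤ |K₁| * (|y' - y| / (c * T)) := by
        rw [← sub_div, abs_div, abs_of_pos (by positivity : 0 < c * x)]
        gcongr
        exacts [le_abs_self K₁, hx.1]
  calc _ ≤ K₂ / √x * |stationaryPoint c x y' - stationaryPoint c x y| :=
        hK₂ x hx0 _ (hpoint y hy) _ (hpoint y' hy')
    _ ≤ |K₂| / √T * (|K₁| * (|y' - y| / (c * T))) := by
        gcongr
        exacts [le_abs_self K₂, hx.1]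
    _ = _ := by field

lemma exists_norm_stationaryAmplitude_stationaryPoint_succ_sub_le (hc : 1 < c) (ha : 0 < a)
    (hab : a ≤ b) (hW : IsWeight W a b) (hC₁ : 0 < C₁) (hC₂ : 0 ≤ C₂) :
    ∃ K ≥ 0, ∀ T > 0, ∀ M > 0, ∀ x ∈ Icc T (2 * T),
      ∀ l ∈ Finset.Ico ⌈C₁ * (T / M)⌉₊ ⌊C₂ * (T / M)⌋₊,
        ‖stationaryAmplitude c W x (stationaryPoint c x ((l + 1 : ℕ) * M)) -
          stationaryAmplitude c W x (stationaryPoint c x (l * M))‖ ≤ K / √T * (M / T) := by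
  obtain ⟨K, hK⟩ := exists_norm_stationaryAmplitude_stationaryPoint_sub_le hc ha hab hW hC₁ C₂
  refine ⟨|K|, abs_nonneg K, fun T hT M hM x hx l hl ↦ ?_⟩
  have hmem : ∀ l ∈ natIcc C₁ C₂ (T / M), (l * M : ℝ) ∈ Icc (C₁ * T) (C₂ * T) := fun l hl ↦ by
    obtain ⟨h₁, h₂⟩ := (mem_natIcc (by positivity)).mp hl
    rw [← mul_div_assoc] at h₁ h₂
    exact ⟨(div_le_iff₀ hM).mp h₁, (le_div_iff₀ hM).mp h₂⟩
  rw [Finset.mem_Ico] at hl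
  refine (hK T hT x hx _ (hmem l (Finset.mem_Icc.mpr ⟨hl.1, hl.2.le⟩)) _
    (hmem (l + 1) (Finset.mem_Icc.mpr ⟨by omega, hl.2⟩))).trans ?_
  rw [Nat.cast_succ, add_mul, one_mul, add_sub_cancel_left, abs_of_pos hM]
  gcongr
  exact le_abs_self K

lemma norm_sum_powerIntegral_pow_four_le (hc : 1 < c) {x T M α δ : ℝ} (hx : 0 < x) (hT : 0 < T)
    (hM : 0 < M) (hδ : 0 ≤ δ) {p q : ℕ}
    (hA : ∀ l ∈ Finset.Icc p q, ‖stationaryAmplitude c W x (stationaryPoint c x (l * M))‖ ≤ α)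
    (hd : ∀ l ∈ Finset.Ico p q, ‖stationaryAmplitude c W x (stationaryPoint c x ((l + 1 : ℕ) * M)) -
      stationaryAmplitude c W x (stationaryPoint c x (l * M))‖ ≤ δ) :
    ‖∑ l ∈ Finset.Icc p q, powerIntegral c W x (l * M)‖ ^ 4 ≤
      8 * (α ^ 4 * ‖dualSum c (Finset.Icc p q) T (T / M) x‖ ^ 4 + δ ^ 4 * (q : ℝ) ^ 3 *
        ∑ k ∈ Finset.Ico p q, ‖dualSum c (Finset.Icc p k) T (T / M) x‖ ^ 4) := by
  have hdual : ∀ k, dualSum c (Finset.Icc p k) T (T / M) x =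
      ∑ l ∈ Finset.Icc p k, (𝐞 (-((x / T) ^ (-(1 / (c - 1))) * (dualCoeff c * T)) *
        (l / (T / M) : ℝ) ^ (c / (c - 1))) : ℂ) := fun k ↦ by
    simp only [dualSum, expSum, Complex.ofReal_one, one_mul]
  simp only [hdual]
  rw [Finset.sum_congr rfl fun l _ ↦
    powerIntegral_eq_stationaryAmplitude_stationaryPoint hc W hx hT hM l.cast_nonneg]
  exact norm_sum_Icc_mul_pow_four_le hδ hA hd

lemma exists_norm_sum_powerIntegral_pow_four_le (hc : 1 < c) (ha : 0 < a) (hab : a ≤ b)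
    (hW : IsWeight W a b) (hC₁ : 0 < C₁) (hC₂ : 0 ≤ C₂) :
    ∃ C > 0, ∀ T > 0, ∀ M > 0, ∀ x ∈ Icc T (2 * T),
      ‖∑ l ∈ natIcc C₁ C₂ (T / M), powerIntegral c W x (l * M)‖ ^ 4 ≤
        C / T ^ 2 * (‖dualSum c (natIcc C₁ C₂ (T / M)) T (T / M) x‖ ^ 4 +
          M / T * ∑ k ∈ Finset.Ico ⌈C₁ * (T / M)⌉₊ ⌊C₂ * (T / M)⌋₊,
            ‖dualSum c (Finset.Icc ⌈C₁ * (T / M)⌉₊ k) T (T / M) x‖ ^ 4) := by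
  obtain ⟨K₁, hK₁, hamp⟩ := exists_norm_stationaryAmplitude_le hc ha hab hW
  obtain ⟨K₂, hK₂, hdiff⟩ :=
    exists_norm_stationaryAmplitude_stationaryPoint_succ_sub_le hc ha hab hW hC₁ hC₂
  refine ⟨8 * (K₁ ^ 4 + K₂ ^ 4 * C₂ ^ 3), by positivity, fun T hT M hM x hx ↦ ?_⟩
  have hx0 : 0 < x := hT.trans_le hx.1
  set p := ⌈C₁ * (T / M)⌉₊
  set q := ⌊C₂ * (T / M)⌋₊
  have habel := norm_sum_powerIntegral_pow_four_le (α := K₁ / √T) hc hx0 hT hM (by positivity)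
    (fun _ _ ↦ (hamp x hx0 _).trans (by gcongr; exact hx.1)) (hdiff T hT M hM x hx)
  refine habel.trans ?_
  set S := ∑ k ∈ Finset.Ico p q, ‖dualSum c (Finset.Icc p k) T (T / M) x‖ ^ 4
  set E := ‖dualSum c (Finset.Icc p q) T (T / M) x‖ ^ 4
  have hsqrt : √T ^ 4 = T ^ 2 := by rw [show 4 = 2 * 2 from rfl, pow_mul, sq_sqrt hT.le]
  calc 8 * ((K₁ / √T) ^ 4 * E + (K₂ / √T * (M / T)) ^ 4 * q ^ 3 * S)
      ≤ 8 * ((K₁ / √T) ^ 4 * E + (K₂ / √T * (M / T)) ^ 4 * (C₂ * (T / M)) ^ 3 * S) := by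
        gcongr; exact Nat.floor_le (by positivity)
    _ = 8 / T ^ 2 * (K₁ ^ 4 * E + K₂ ^ 4 * C₂ ^ 3 * (M / T * S)) := by
        rw [mul_pow, div_pow, div_pow, hsqrt]
        field
    _ ≤ 8 / T ^ 2 * ((K₁ ^ 4 + K₂ ^ 4 * C₂ ^ 3) * E +
          (K₁ ^ 4 + K₂ ^ 4 * C₂ ^ 3) * (M / T * S)) := by
        gcongr
        · exact le_add_of_nonneg_right (by positivity)
        · exact le_add_of_nonneg_left (by positivity)
    _ = _ := by rw [natIcc]; ring

lemma exists_norm_powerSum_pow_four_le (hc : 1 < c) (ha : 0 < a) (hab : a ≤ b)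
    (hW : IsWeight W a b) :
    ∃ C > 0, ∀ T ≥ 1, ∀ M ≥ 1, ∀ x ∈ Icc T (2 * T), ‖powerSum c W a b M x‖ ^ 4 ≤
      C * ((M / T) ^ 4 + 1 + M ^ 4 / T ^ 2 *
        (‖dualSum c (natIcc (c * a ^ (c - 1) / 2) (4 * c * b ^ (c - 1)) (T / M)) T (T / M) x‖ ^ 4 +
          M / T * ∑ k ∈ Finset.Ico ⌈c * a ^ (c - 1) / 2 * (T / M)⌉₊
            ⌊4 * c * b ^ (c - 1) * (T / M)⌋₊,
            ‖dualSum c (Finset.Icc ⌈c * a ^ (c - 1) / 2 * (T / M)⌉₊ k) T (T / M) x‖ ^ 4)) := by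
  have hb : 0 < b := ha.trans_le hab
  obtain ⟨K, hK, hpoisson⟩ := exists_norm_powerSum_sub_le hc ha hab hW
  obtain ⟨C, hC, hdual⟩ := exists_norm_sum_powerIntegral_pow_four_le hc ha hab hW
    (by positivity : 0 < c * a ^ (c - 1) / 2) (by positivity : 0 ≤ 4 * c * b ^ (c - 1))
  refine ⟨64 * K ^ 4 + 8 * C, by positivity, fun T hT M hM x hx ↦ ?_⟩
  have hT0 : 0 < T := by linarith
  have hM0 : 0 < M := by linarith
  specialize hpoisson T hT M hM x hx
  specialize hdual T hT0 M hM0 x hx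
  set Z := ∑ l ∈ natIcc (c * a ^ (c - 1) / 2) (4 * c * b ^ (c - 1)) (T / M),
    powerIntegral c W x (l * M)
  set D := ‖dualSum c (natIcc _ _ (T / M)) T (T / M) x‖ ^ 4 + M / T * _
  have hnorm : ‖powerSum c W a b M x‖ ≤ K * (M / T + 1) + M * ‖Z‖ := by
    calc ‖powerSum c W a b M x‖ ≤ ‖powerSum c W a b M x - M * Z‖ + ‖(M : ℂ) * Z‖ :=
          norm_le_norm_sub_add _ _
      _ ≤ K * (M / T + 1) + M * ‖Z‖ := by
          rw [norm_mul, Complex.norm_real, Real.norm_of_nonneg hM0.le]; gcongr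
  calc ‖powerSum c W a b M x‖ ^ 4 ≤ (K * (M / T + 1) + M * ‖Z‖) ^ 4 := by gcongr
    _ ≤ 8 * ((K * (M / T + 1)) ^ 4 + (M * ‖Z‖) ^ 4) :=
        add_pow_four_le (by positivity) (by positivity)
    _ ≤ 8 * (K ^ 4 * (8 * ((M / T) ^ 4 + 1 ^ 4)) + M ^ 4 * (C / T ^ 2 * D)) := by
        rw [mul_pow, mul_pow]
        gcongr
        exact add_pow_four_le (by positivity) zero_le_one
    _ = 64 * K ^ 4 * ((M / T) ^ 4 + 1) + 8 * C * (M ^ 4 / T ^ 2 * D) := by ring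
    _ ≤ 64 * K ^ 4 * ((M / T) ^ 4 + 1 + M ^ 4 / T ^ 2 * D) +
          8 * C * ((M / T) ^ 4 + 1 + M ^ 4 / T ^ 2 * D) :=
        add_le_add
          (mul_le_mul_of_nonneg_left (le_add_of_nonneg_right (by positivity)) (by positivity))
          (mul_le_mul_of_nonneg_left (le_add_of_nonneg_left (by positivity)) (by positivity))
    _ = _ := by ring

lemma integral_add_mul_add_mul_sum {ι : Type*} {u v : ℝ} (s : Finset ι) {f : ℝ → ℝ}
    {g : ι → ℝ → ℝ} (hf : ContinuousOn f (uIcc u v)) (hg : ∀ k, ContinuousOn (g k) (uIcc u v))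
    (K A B r : ℝ) :
    ∫ x in u..v, K * (A + B * (f x + r * ∑ k ∈ s, g k x)) =
      K * ((v - u) * A + B * ((∫ x in u..v, f x) + r * ∑ k ∈ s, ∫ x in u..v, g k x)) := by
  have hsum : ContinuousOn (fun x ↦ r * ∑ k ∈ s, g k x) (uIcc u v) :=
    continuousOn_const.mul (continuousOn_finsetSum _ fun k _ ↦ hg k)
  have hadd : ContinuousOn (fun x ↦ B * (f x + r * ∑ k ∈ s, g k x)) (uIcc u v) :=
    continuousOn_const.mul (hf.add hsum)
  rw [intervalIntegral.integral_const_mul, intervalIntegral.integral_add intervalIntegrable_const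
      hadd.intervalIntegrable,
    intervalIntegral.integral_const, intervalIntegral.integral_const_mul,
    intervalIntegral.integral_add hf.intervalIntegrable hsum.intervalIntegrable,
    intervalIntegral.integral_const_mul,
    intervalIntegral.integral_finsetSum fun k _ ↦ (hg k).intervalIntegrable, smul_eq_mul]

lemma pow_four_div_sq_mul_eq {M T : ℝ} (hM : 0 < M) (hT : 0 < T) (β : ℝ) :
    M ^ 4 / T ^ 2 * (T * (T / M) ^ β + (T / M) ^ 4) = M ^ (4 - β) * T ^ (β - 1) + T ^ 2 := by
  rw [div_rpow hT.le hM.le, rpow_sub hM, rpow_sub_one hT.ne', show (4 : ℝ) = (4 : ℕ) from rfl,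
    rpow_natCast]
  field

lemma div_pow_three_add_add_mul_le {A B D T : ℝ} (hT : 1 ≤ T) (hD : 0 ≤ D) (hA : 0 ≤ A)
    (hB : 0 ≤ B) : A / T ^ 3 + T + D * (B + T ^ 2) ≤ (1 + D) * (A / T + B + T ^ 2) := by
  have hcube : A / T ^ 3 ≤ A / T := by gcongr; exact le_self_pow₀ hT three_ne_zero
  have hsq : T ≤ T ^ 2 := le_self_pow₀ hT two_ne_zero
  have hdiv : 0 ≤ A / T := by positivity
  nlinarith [mul_nonneg hD hdiv]

lemma exists_integral_norm_dualSum_pow_four_add_sum_le (hc : 1 < c)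
    (h : PowerEnergyBound (c / (c - 1)) β) (hC₁ : 0 < C₁) (hC : C₁ < C₂) :
    ∃ D > 0, ∀ T > 0, ∀ M > 0,
      (∫ x in T..2 * T, ‖dualSum c (natIcc C₁ C₂ (T / M)) T (T / M) x‖ ^ 4) +
        M / T * ∑ k ∈ Finset.Ico ⌈C₁ * (T / M)⌉₊ ⌊C₂ * (T / M)⌋₊,
          ∫ x in T..2 * T, ‖dualSum c (Finset.Icc ⌈C₁ * (T / M)⌉₊ k) T (T / M) x‖ ^ 4 ≤
      D * (T * (T / M) ^ β + (T / M) ^ 4) := by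
  obtain ⟨D, hD, hdual⟩ := exists_integral_norm_dualSum_pow_four_le hc h hC₁ hC
  have hC₂ : 0 < C₂ := hC₁.trans hC
  refine ⟨D * (1 + C₂), by positivity, fun T hT M hM ↦ ?_⟩
  set L := T / M
  set p := ⌈C₁ * L⌉₊
  set q := ⌊C₂ * L⌋₊
  set I := D * (T * L ^ β + L ^ 4)
  have hprefix : ∀ k ∈ Finset.Ico p q,
      ∫ x in T..2 * T, ‖dualSum c (Finset.Icc p k) T L x‖ ^ 4 ≤ I := fun k hk ↦
    hdual T hT L (by positivity) _ (Finset.Icc_subset_Icc_right (Finset.mem_Ico.mp hk).2.le)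
  have hsum : ∑ k ∈ Finset.Ico p q, ∫ x in T..2 * T, ‖dualSum c (Finset.Icc p k) T L x‖ ^ 4 ≤
      C₂ * L * I := by
    refine (Finset.sum_le_card_nsmul _ _ _ hprefix).trans ?_
    rw [nsmul_eq_mul, Nat.card_Ico]
    gcongr
    exact (Nat.cast_le.mpr (q.sub_le p)).trans (Nat.floor_le (by positivity))
  calc _ ≤ I + M / T * (C₂ * L * I) := by
        gcongr
        exact hdual T hT L (by positivity) _ subset_rfl
    _ = _ := by simp only [I, L]; field

lemma exists_integral_norm_powerSum_pow_four_le (hc : 1 < c)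
    (h : PowerEnergyBound (c / (c - 1)) β) (ha : 0 < a) (hab : a < b) (hW : IsWeight W a b) :
    ∃ C > 0, ∀ T ≥ 1, ∀ M ≥ 1, ∫ x in T..2 * T, ‖powerSum c W a b M x‖ ^ 4 ≤
      C * (M ^ 4 / T + M ^ (4 - β) * T ^ (β - 1) + T ^ 2) := by
  have hC₁₂ : c * a ^ (c - 1) / 2 < 4 * c * b ^ (c - 1) := by
    have hpow : a ^ (c - 1) ≤ b ^ (c - 1) := rpow_le_rpow ha.le hab.le (sub_nonneg.mpr hc.le)
    nlinarith [rpow_pos_of_pos ha (c - 1)]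
  obtain ⟨K, hK, hpoint⟩ := exists_norm_powerSum_pow_four_le hc ha hab.le hW
  obtain ⟨D, hD, hdual⟩ := exists_integral_norm_dualSum_pow_four_add_sum_le hc h
    (by positivity : 0 < c * a ^ (c - 1) / 2) hC₁₂
  set C₁ := c * a ^ (c - 1) / 2
  set C₂ := 4 * c * b ^ (c - 1)
  refine ⟨K * (1 + D), by positivity, fun T hT M hM ↦ ?_⟩
  have hT0 : 0 < T := by linarith
  have hM0 : 0 < M := by linarith
  set F : Finset ℕ → ℝ → ℝ := fun s x ↦ ‖dualSum c s T (T / M) x‖ ^ 4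
  have hF : ∀ s, ContinuousOn (F s) (uIcc T (2 * T)) := fun s ↦ by
    rw [uIcc_of_le (by linarith)]; exact (continuousOn_dualSum c s hT0 (T / M)).norm.pow 4
  calc ∫ x in T..2 * T, ‖powerSum c W a b M x‖ ^ 4
      ≤ ∫ x in T..2 * T, K * ((M / T) ^ 4 + 1 + M ^ 4 / T ^ 2 * (F (natIcc C₁ C₂ (T / M)) x +
          M / T * ∑ k ∈ Finset.Ico ⌈C₁ * (T / M)⌉₊ ⌊C₂ * (T / M)⌋₊,
            F (Finset.Icc ⌈C₁ * (T / M)⌉₊ k) x)) :=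
        intervalIntegral.integral_mono_on (by linarith)
          ((continuous_expSum.norm.pow 4).intervalIntegrable _ _)
          (ContinuousOn.intervalIntegrable <| continuousOn_const.mul <| continuousOn_const.add <|
            continuousOn_const.mul <| (hF _).add <| continuousOn_const.mul <|
              continuousOn_finsetSum _ fun k _ ↦ hF _) (hpoint T hT M hM)
    _ ≤ K * (T * ((M / T) ^ 4 + 1) +
          M ^ 4 / T ^ 2 * (D * (T * (T / M) ^ β + (T / M) ^ 4))) := by
        rw [integral_add_mul_add_mul_sum _ (hF _) fun k ↦ hF _,
          show 2 * T - T = T by ring]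
        gcongr
        exact hdual T hT0 M hM0
    _ = K * (M ^ 4 / T ^ 3 + T + D * (M ^ (4 - β) * T ^ (β - 1) + T ^ 2)) := by
        rw [← pow_four_div_sq_mul_eq hM0 hT0]
        field
    _ ≤ _ := by
        rw [mul_assoc K]
        gcongr
        exact div_pow_three_add_add_mul_le hT hD.le (by positivity) (by positivity)

end DyadicBlock

section TrivialBound

open Real Set

lemma approxEnergy_le_card_pow_three_mul {ι : Type*} {s : Finset ι} {ω : ι → ℝ} {δ : ℝ} {R : ℕ}
    (h : ∀ x, {i ∈ s | |x - ω i| ≤ δ}.card ≤ R) : approxEnergy ω s δ ≤ s.card ^ 3 * R := by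
  simp only [Finset.card_filter] at h
  rw [approxEnergy, Finset.card_filter]
  simp only [gap, Finset.sum_product]
  refine (Finset.sum_le_card_nsmul s _ _ fun i _ ↦ Finset.sum_le_card_nsmul s _ _ fun j _ ↦
    Finset.sum_le_card_nsmul s _ _ fun k _ ↦ h (ω i + ω j - ω k)).trans_eq ?_
  simp only [smul_eq_mul]
  ring

lemma card_le_floor_add_one {s : Finset ℕ} {R : ℝ}
    (h : ∀ m ∈ s, ∀ n ∈ s, |(m : ℝ) - n| ≤ R) : s.card ≤ ⌊R⌋₊ + 1 := by
  rcases s.eq_empty_or_nonempty with rfl | hs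
  · exact Nat.zero_le _
  have hsub : s ⊆ Finset.Icc (s.min' hs) (s.min' hs + ⌊R⌋₊) := fun n hn ↦ by
    have hmin : s.min' hs ≤ n := s.min'_le n hn
    have hdiff : n - s.min' hs ≤ ⌊R⌋₊ := Nat.le_floor <| by
      rw [Nat.cast_sub hmin]
      exact (le_abs_self _).trans (h n hn _ (s.min'_mem hs))
    rw [Finset.mem_Icc]
    omega
  refine (Finset.card_le_card hsub).trans_eq ?_
  rw [Nat.card_Icc]
  omega

lemma card_natIcc_le {a b M : ℝ} (haM : 0 < a * M) (hbM : 0 ≤ b * M) :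
    ((natIcc a b M).card : ℝ) ≤ b * M := by
  have hceil : 0 < ⌈a * M⌉₊ := Nat.ceil_pos.mpr haM
  have hcard : (natIcc a b M).card ≤ ⌊b * M⌋₊ := by rw [natIcc, Nat.card_Icc]; omega
  exact (Nat.cast_le.mpr hcard).trans (Nat.floor_le hbM)

lemma exists_abs_sub_le_mul_abs_rpow_sub_rpow {a c : ℝ} (ha : 0 < a) (b : ℝ) (hc : 0 < c) :
    ∃ K, ∀ u ∈ Icc a b, ∀ v ∈ Icc a b, |u - v| ≤ K * |u ^ c - v ^ c| := by
  obtain ⟨K, hK⟩ := exists_abs_rpow_sub_rpow_le (rpow_pos_of_pos ha c) (b ^ c) c⁻¹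
  refine ⟨K, fun u hu v hv ↦ ?_⟩
  have hmem : ∀ w ∈ Icc a b, w ^ c ∈ Icc (a ^ c) (b ^ c) := fun w hw ↦
    ⟨rpow_le_rpow ha.le hw.1 hc.le, rpow_le_rpow (ha.le.trans hw.1) hw.2 hc.le⟩
  simpa only [rpow_rpow_inv (ha.le.trans hu.1) hc.ne', rpow_rpow_inv (ha.le.trans hv.1) hc.ne']
    using hK _ (hmem u hu) _ (hmem v hv)

lemma powerEnergyBound_three {c : ℝ} (hc : 0 < c) : PowerEnergyBound c 3 := by
  intro a b ha hab
  have hb : 0 < b := ha.trans hab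
  obtain ⟨K, hK⟩ := exists_abs_sub_le_mul_abs_rpow_sub_rpow ha b hc
  refine ⟨b ^ 3 * (1 + 2 * |K|), by positivity, fun M hM δ hδ ↦ ?_⟩
  set s := natIcc a b M
  set ω : ℕ → ℝ := fun n ↦ (n / M : ℝ) ^ c
  have hmem : ∀ n ∈ s, (n / M : ℝ) ∈ Icc a b := fun n hn ↦ by
    obtain ⟨h₁, h₂⟩ := (mem_natIcc (by positivity)).mp hn
    exact ⟨(le_div_iff₀ hM).mpr h₁, (div_le_iff₀ hM).mpr h₂⟩
  have hfiber : ∀ x, {n ∈ s | |x - ω n| ≤ δ}.card ≤ ⌊2 * |K| * δ * M⌋₊ + 1 := fun x ↦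
    card_le_floor_add_one fun m hm n hn ↦ by
      rw [Finset.mem_filter] at hm hn
      have hmn : |(m / M : ℝ) - n / M| ≤ |K| * (2 * δ) := by
        refine (hK _ (hmem m hm.1) _ (hmem n hn.1)).trans ?_
        gcongr
        · exact le_abs_self K
        · rw [← sub_sub_sub_cancel_left _ _ x, two_mul]
          exact (abs_sub _ _).trans (add_le_add hn.2 hm.2)
      rw [← sub_div, abs_div, abs_of_pos hM, div_le_iff₀ hM] at hmn
      linarith
  have hcard : (s.card : ℝ) ≤ b * M := card_natIcc_le (by positivity) (by positivity)
  calc (approxEnergy ω s δ : ℝ)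
      ≤ s.card ^ 3 * (⌊2 * |K| * δ * M⌋₊ + 1) := by
        exact_mod_cast approxEnergy_le_card_pow_three_mul hfiber
    _ ≤ (b * M) ^ 3 * (2 * |K| * δ * M + 1) := by
        gcongr; exact Nat.floor_le (by positivity)
    _ = b ^ 3 * (M ^ 3 + 2 * |K| * (M ^ 4 * δ)) := by ring
    _ ≤ b ^ 3 * ((1 + 2 * |K|) * (M ^ 3 + M ^ 4 * δ)) := by
        gcongr
        nlinarith [mul_nonneg (abs_nonneg K) (by positivity : 0 ≤ M ^ 3),
          (by positivity : 0 ≤ M ^ 4 * δ)]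
    _ = b ^ 3 * (1 + 2 * |K|) * (M ^ (3 : ℝ) + M ^ 4 * δ) := by
        rw [show (3 : ℝ) = (3 : ℕ) from rfl, rpow_natCast, mul_assoc]

end TrivialBound

section DyadicSummation

open Real Set MeasureTheory

variable {g : ℝ → ℝ} {K X : ℝ}

lemma integral_one_two_pow_le (hg : Continuous g) (hK : 0 ≤ K) (hX : 0 < X)
    (h : ∀ T ∈ Icc 1 X, ∫ x in T..2 * T, g x ≤ K * (1 / T + T / X)) {n : ℕ}
    (hn : (2 : ℝ) ^ n ≤ X) : ∫ x in 1..2 ^ (n + 1), g x ≤ K * (2 + 2 ^ (n + 1) / X) := by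
  suffices hind : ∀ m ≤ n + 1, ∫ x in 1..2 ^ m, g x ≤ K * (2 - 2 / 2 ^ m + 2 ^ m / X) by
    refine (hind (n + 1) le_rfl).trans ?_
    gcongr
    exact sub_le_self _ (by positivity)
  intro m hm
  induction m with
  | zero =>
    rw [pow_zero, intervalIntegral.integral_same, div_one, sub_self, zero_add]
    positivity
  | succ m ih =>
    have hpow : (2 : ℝ) ^ m ≤ X := (pow_le_pow_right₀ one_le_two (by omega)).trans hn
    have hblock := h (2 ^ m) ⟨one_le_pow₀ one_le_two, hpow⟩
    rw [← pow_succ'] at hblock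
    calc ∫ x in 1..2 ^ (m + 1), g x
        = (∫ x in 1..2 ^ m, g x) + ∫ x in 2 ^ m..2 ^ (m + 1), g x :=
          (intervalIntegral.integral_add_adjacent_intervals (hg.intervalIntegrable _ _)
            (hg.intervalIntegrable _ _)).symm
      _ ≤ K * (2 - 2 / 2 ^ m + 2 ^ m / X) + K * (1 / 2 ^ m + 2 ^ m / X) :=
          add_le_add (ih (by omega)) hblock
      _ = K * (2 - 2 / 2 ^ (m + 1) + 2 ^ (m + 1) / X) := by rw [pow_succ]; field

lemma integral_one_le_of_dyadic (hg : Continuous g) (hg0 : ∀ x, 0 ≤ g x) (hK : 0 ≤ K)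
    (h : ∀ T ∈ Icc 1 X, ∫ x in T..2 * T, g x ≤ K * (1 / T + T / X)) {T : ℝ} (hT : T ∈ Icc 1 X) :
    ∫ x in 1..T, g x ≤ 4 * K := by
  have hX : 1 ≤ X := hT.1.trans hT.2
  obtain ⟨n, hn, hn'⟩ := exists_nat_pow_near hX one_lt_two
  calc ∫ x in 1..T, g x ≤ ∫ x in 1..2 ^ (n + 1), g x :=
        intervalIntegral.integral_mono_interval le_rfl hT.1 (hT.2.trans hn'.le)
          (.of_forall hg0) (hg.intervalIntegrable _ _)
    _ ≤ K * (2 + 2 ^ (n + 1) / X) := integral_one_two_pow_le hg hK (by positivity) h hn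
    _ ≤ K * (2 + 2) := by
        gcongr
        rw [div_le_iff₀ (by positivity), pow_succ']
        gcongr
    _ = 4 * K := by ring

end DyadicSummation

section Iteration

open Real Set MeasureTheory

variable {a b c β : ℝ} {W : ℝ → ℝ}

lemma pow_four_div_add_rpow_mul_rpow_add_sq_le {M T : ℝ} (hM : 1 ≤ M) (hβ : 2 ≤ β)
    (hT : T ∈ Icc 1 (M ^ (β / (β - 1)))) :
    M ^ 4 / T + M ^ (4 - β) * T ^ (β - 1) + T ^ 2 ≤
      2 * M ^ 4 * (1 / T + T / M ^ (β / (β - 1))) := by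
  have hM0 : 0 < M := by linarith
  have hT0 : 0 < T := by linarith [hT.1]
  have hβ' : β - 1 ≠ 0 := by linarith
  set X := M ^ (β / (β - 1)) with hX_def
  have hX : 0 < X := by positivity
  have hXβ : X ^ (β - 2) * X = M ^ β := by
    rw [← rpow_add_one hX.ne', hX_def, ← rpow_mul hM0.le]
    congr 1
    field [hβ']
  have h₁ : M ^ (4 - β) * T ^ (β - 1) ≤ M ^ 4 * (T / X) := by
    calc M ^ (4 - β) * T ^ (β - 1) = M ^ 4 / M ^ β * (T ^ (β - 2) * T) := by
          rw [← rpow_add_one hT0.ne', rpow_sub hM0, show (4 : ℝ) = (4 : ℕ) from rfl, rpow_natCast]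
          ring_nf
      _ ≤ M ^ 4 / M ^ β * (X ^ (β - 2) * T) := by
          gcongr
          exact hT.2
      _ = M ^ 4 * (T / X) := by
          rw [← hXβ]
          field
  have hX2 : X ≤ M ^ 2 := by
    rw [← rpow_two]
    refine rpow_le_rpow_of_exponent_le hM ?_
    rw [div_le_iff₀ (by linarith)]
    linarith
  have h₂ : T ^ 2 ≤ M ^ 4 * (T / X) := by
    rw [← mul_div_assoc, le_div_iff₀ hX]
    calc T ^ 2 * X = T * (T * X) := by ring
      _ ≤ T * (M ^ 2 * M ^ 2) := by
          gcongr
          exact hT.2.trans hX2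
      _ = M ^ 4 * T := by ring
  have h₃ : 0 ≤ M ^ 4 / T := by positivity
  calc M ^ 4 / T + M ^ (4 - β) * T ^ (β - 1) + T ^ 2
      ≤ M ^ 4 / T + M ^ 4 * (T / X) + M ^ 4 * (T / X) := by gcongr
    _ ≤ 2 * (M ^ 4 / T) + M ^ 4 * (T / X) + M ^ 4 * (T / X) := by linarith
    _ = 2 * M ^ 4 * (1 / T + T / X) := by ring

lemma exists_norm_powerSum_le (c : ℝ) (ha : 0 < a) (hab : a ≤ b) (hW : IsWeight W a b) :
    ∃ K > 0, ∀ M > 0, ∀ x, ‖powerSum c W a b M x‖ ≤ K * M := by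
  have hb : 0 < b := ha.trans_le hab
  obtain ⟨B, hB⟩ := hW.exists_bound
  refine ⟨b * (|B| + 1), by positivity, fun M hM x ↦ (norm_expSum_le _ _ _ _).trans ?_⟩
  calc ∑ n ∈ natIcc a b M, |W (n / M)| ≤ (natIcc a b M).card * (|B| + 1) := by
        rw [← nsmul_eq_mul]
        exact Finset.sum_le_card_nsmul _ _ _ fun n _ ↦ by linarith [(hB (n / M)).1, le_abs_self B]
    _ ≤ b * M * (|B| + 1) := by gcongr; exact card_natIcc_le (by positivity) (by positivity)
    _ = b * (|B| + 1) * M := by ring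

lemma exists_integral_zero_norm_powerSum_pow_four_le (hc : 1 < c) (hβ : 2 ≤ β)
    (h : PowerEnergyBound (c / (c - 1)) β) (ha : 0 < a) (hab : a < b) (hW : IsWeight W a b) :
    ∃ C > 0, ∀ M ≥ 1, ∀ T ∈ Icc 1 (M ^ (β / (β - 1))),
      ∫ x in 0..T, ‖powerSum c W a b M x‖ ^ 4 ≤ C * M ^ 4 := by
  obtain ⟨K, hK, htrivial⟩ := exists_norm_powerSum_le c ha hab.le hW
  obtain ⟨D, hD, hblock⟩ := exists_integral_norm_powerSum_pow_four_le hc h ha hab hW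
  refine ⟨K ^ 4 + 8 * D, by positivity, fun M hM T hT ↦ ?_⟩
  have hM0 : 0 < M := by linarith
  have hcont : Continuous fun x ↦ ‖powerSum c W a b M x‖ ^ 4 := continuous_expSum.norm.pow 4
  have hzero : ∫ x in 0..1, ‖powerSum c W a b M x‖ ^ 4 ≤ (K * M) ^ 4 := by
    refine (intervalIntegral.integral_mono_on (μ := volume) zero_le_one
      (hcont.intervalIntegrable _ _) intervalIntegrable_const fun x _ ↦
        pow_le_pow_left₀ (norm_nonneg _) (htrivial M hM0 x) 4).trans_eq ?_
    rw [intervalIntegral.integral_const, sub_zero, one_smul]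
  have hone : ∫ x in 1..T, ‖powerSum c W a b M x‖ ^ 4 ≤ 4 * (D * (2 * M ^ 4)) :=
    integral_one_le_of_dyadic hcont (fun x ↦ by positivity) (by positivity) (fun S hS ↦ by
      rw [mul_assoc]
      exact (hblock S hS.1 M hM).trans (mul_le_mul_of_nonneg_left
        (pow_four_div_add_rpow_mul_rpow_add_sq_le hM hβ hS) hD.le)) hT
  rw [← intervalIntegral.integral_add_adjacent_intervals (hcont.intervalIntegrable 0 1)
    (hcont.intervalIntegrable 1 T)]
  linarith

lemma exists_approxEnergy_rpow_le (hc : 1 < c) (hβ : 2 ≤ β)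
    (h : PowerEnergyBound (c / (c - 1)) β) (ha : 0 < a) (hab : a < b) :
    ∃ C > 0, ∀ M ≥ 1, ∀ T ∈ Icc 1 (M ^ (β / (β - 1))),
      (approxEnergy (fun n : ℕ ↦ (n / M : ℝ) ^ c) (natIcc a b M) (1 / (8 * T)) : ℝ) ≤
        C * (M ^ 4 / T) := by
  obtain ⟨W, hW, hW0, hW1⟩ := exists_isWeight ha hab
  obtain ⟨C, hC, hmoment⟩ := exists_integral_zero_norm_powerSum_pow_four_le hc hβ h
    (by positivity : 0 < a / 4) (by linarith) hW
  refine ⟨4 * C, by positivity, fun M hM T hT ↦ ?_⟩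
  have hM0 : 0 < M := by linarith
  have hT0 : 0 < T := by linarith [hT.1]
  have hb : 0 < b := ha.trans hab
  have hsub : natIcc a b M ⊆ natIcc (a / 4) (b + a) M :=
    Finset.Icc_subset_Icc (Nat.ceil_mono (by nlinarith)) (Nat.floor_mono (by nlinarith))
  have hweight : ∀ n ∈ natIcc a b M, 1 ≤ W (n / M) := fun n hn ↦ by
    obtain ⟨h₁, h₂⟩ := (mem_natIcc (by positivity)).mp hn
    exact (hW1 _ ⟨(le_div_iff₀ hM0).mpr h₁, (div_le_iff₀ hM0).mpr h₂⟩).ge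
  calc _ ≤ 4 / T * ∫ x in 0..T, ‖powerSum c W (a / 4) (b + a) M x‖ ^ 4 :=
        approxEnergy_le_integral_norm_expSum hsub (fun n _ ↦ hW0 _) hweight hT0
    _ ≤ 4 / T * (C * M ^ 4) := by gcongr; exact hmoment M hM T hT
    _ = 4 * C * (M ^ 4 / T) := by ring

lemma exists_approxEnergy_rpow_le_of_lt (hc : 1 < c) (hβ : 2 ≤ β)
    (h : PowerEnergyBound (c / (c - 1)) β) (ha : 0 < a) (hab : a < b) :
    ∃ C > 0, ∀ M ≥ 1, ∀ δ > 0, δ < 1 / 8 →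
      (approxEnergy (fun n : ℕ ↦ (n / M : ℝ) ^ c) (natIcc a b M) δ : ℝ) ≤
        C * (M ^ (4 - β / (β - 1)) + M ^ 4 * δ) := by
  obtain ⟨C, hC, hmain⟩ := exists_approxEnergy_rpow_le hc hβ h ha hab
  refine ⟨8 * C, by positivity, fun M hM δ hδ hδ1 ↦ ?_⟩
  have hM0 : 0 < M := zero_lt_one.trans_le hM
  set X := M ^ (β / (β - 1)) with hX_def
  set T := min (1 / (8 * δ)) X with hT_def
  have hX : 1 ≤ X := one_le_rpow hM (div_nonneg (by linarith) (by linarith))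
  have hT : T ∈ Icc 1 X :=
    ⟨le_min ((one_le_div (by positivity)).mpr (by linarith)) hX, min_le_right _ _⟩
  have hδT : δ ≤ 1 / (8 * T) := by
    rw [le_one_div hδ (by positivity), ← le_div_iff₀' (by norm_num), div_div, mul_comm δ]
    exact min_le_left _ _
  have hTinv : 1 / T ≤ 8 * δ + 1 / X := by
    rcases min_choice (1 / (8 * δ)) X with hmin | hmin <;> rw [hT_def, hmin]
    · rw [one_div_one_div]
      exact le_add_of_nonneg_right (by positivity)
    · exact le_add_of_nonneg_left (by positivity)
  calc _ ≤ (approxEnergy (fun n : ℕ ↦ (n / M : ℝ) ^ c) (natIcc a b M) (1 / (8 * T)) : ℝ) := by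
        exact_mod_cast approxEnergy_mono subset_rfl hδT
    _ ≤ C * (M ^ 4 / T) := hmain M hM T hT
    _ = C * M ^ 4 * (1 / T) := by ring
    _ ≤ C * M ^ 4 * (8 * δ + 8 * (1 / X)) := by
        gcongr
        refine hTinv.trans (add_le_add_right (le_mul_of_one_le_left (by positivity) ?_) _)
        norm_num
    _ = 8 * C * (M ^ (4 - β / (β - 1)) + M ^ 4 * δ) := by
        rw [rpow_sub hM0, show (4 : ℝ) = (4 : ℕ) from rfl, rpow_natCast, ← hX_def]
        ring

lemma approxEnergy_le_mul_pow_four (ω : ℕ → ℝ) (δ : ℝ) {M : ℝ} (haM : 0 < a * M)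
    (hbM : 0 ≤ b * M) : (approxEnergy ω (natIcc a b M) δ : ℝ) ≤ b ^ 4 * M ^ 4 := by
  calc (approxEnergy ω (natIcc a b M) δ : ℝ) ≤ ((natIcc a b M).card : ℝ) ^ 4 := by
        exact_mod_cast approxEnergy_le_card_pow_four ω _ δ
    _ ≤ b ^ 4 * M ^ 4 := by rw [← mul_pow]; gcongr; exact card_natIcc_le haM hbM

lemma PowerEnergyBound.step (hc : 1 < c) (hβ : 2 ≤ β) (h : PowerEnergyBound (c / (c - 1)) β) :
    PowerEnergyBound c (4 - β / (β - 1)) := by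
  intro a b ha hab
  have hb : 0 < b := ha.trans hab
  obtain ⟨C, hC, hsmall⟩ := exists_approxEnergy_rpow_le_of_lt hc hβ h ha hab
  refine ⟨C + 8 * b ^ 4, by positivity, fun M hM δ hδ ↦ ?_⟩
  by_cases hδM : 1 ≤ M ∧ δ < 1 / 8
  · refine (hsmall M hδM.1 δ hδ hδM.2).trans ?_
    gcongr
    exact le_add_of_nonneg_right (by positivity)
  have htrivial := approxEnergy_le_mul_pow_four (b := b) (fun n : ℕ ↦ (n / M : ℝ) ^ c) δ
    (mul_pos ha hM) (mul_pos hb hM).le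
  have hpow : M ^ 4 ≤ 8 * (M ^ (4 - β / (β - 1)) + M ^ 4 * δ) := by
    rcases not_and_or.mp hδM with hM1 | hδ1
    · have hexp : 0 ≤ β / (β - 1) := div_nonneg (by linarith) (by linarith)
      have hle : M ^ (4 : ℝ) ≤ M ^ (4 - β / (β - 1)) :=
        rpow_le_rpow_of_exponent_ge hM (not_le.mp hM1).le (by linarith)
      rw [show (4 : ℝ) = (4 : ℕ) from rfl, rpow_natCast] at hle
      linarith [pow_pos hM 4, mul_pos (pow_pos hM 4) hδ]
    · nlinarith [pow_pos hM 4, rpow_pos_of_pos hM (4 - β / (β - 1))]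
  calc _ ≤ b ^ 4 * M ^ 4 := htrivial
    _ ≤ b ^ 4 * (8 * (M ^ (4 - β / (β - 1)) + M ^ 4 * δ)) := by gcongr
    _ = 8 * b ^ 4 * (M ^ (4 - β / (β - 1)) + M ^ 4 * δ) := by ring
    _ ≤ (C + 8 * b ^ 4) * (M ^ (4 - β / (β - 1)) + M ^ 4 * δ) := by
        gcongr
        exact le_add_of_nonneg_left hC.le

lemma powerEnergyBound_two_add_one_div (k : ℕ) {c : ℝ} (hc : 1 < c) :
    PowerEnergyBound c (2 + 1 / (k + 1)) := by
  induction k generalizing c with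
  | zero =>
    convert powerEnergyBound_three (zero_lt_one.trans hc) using 1
    norm_num
  | succ k ih =>
    have hdual : 1 < c / (c - 1) := (one_lt_div (sub_pos.mpr hc)).mpr (by linarith)
    convert PowerEnergyBound.step hc (le_add_of_nonneg_right (by positivity)) (ih hdual) using 1
    rw [show 2 + 1 / ((k : ℝ) + 1) - 1 = (k + 2) / (k + 1) by field]
    push_cast
    field

end Iteration

section Counting

open Real

lemma ncard_le_approxEnergy (c : ℝ) {M : ℝ} (hM : 0 < M) (γ : ℝ) :
    Set.ncard {q : ℕ × ℕ × ℕ × ℕ |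
      (M < (q.1 : ℝ) ∧ (q.1 : ℝ) ≤ 2 * M) ∧
      (M < (q.2.1 : ℝ) ∧ (q.2.1 : ℝ) ≤ 2 * M) ∧
      (M < (q.2.2.1 : ℝ) ∧ (q.2.2.1 : ℝ) ≤ 2 * M) ∧
      (M < (q.2.2.2 : ℝ) ∧ (q.2.2.2 : ℝ) ≤ 2 * M) ∧
      |(q.1 : ℝ) ^ c + (q.2.1 : ℝ) ^ c - (q.2.2.1 : ℝ) ^ c - (q.2.2.2 : ℝ) ^ c| < γ} ≤
      approxEnergy (fun n : ℕ ↦ (n / M : ℝ) ^ c) (natIcc 1 2 M) (γ / M ^ c) := by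
  have hmem : ∀ n : ℕ, M < n ∧ n ≤ 2 * M → n ∈ natIcc 1 2 M := fun n hn ↦
    (mem_natIcc (by positivity)).mpr ⟨by linarith [hn.1], hn.2⟩
  rw [approxEnergy, ← Set.ncard_coe_finset]
  refine Set.ncard_le_ncard ?_ (Finset.finite_toSet _)
  rintro q ⟨h₁, h₂, h₃, h₄, hq⟩
  simp only [Finset.coe_filter, Finset.mem_product, Set.mem_ofPred_eq]
  refine ⟨⟨hmem _ h₁, hmem _ h₂, hmem _ h₃, hmem _ h₄⟩, ?_⟩
  have hMc : 0 < M ^ c := rpow_pos_of_pos hM c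
  simp only [gap, div_rpow (Nat.cast_nonneg _) hM.le]
  rw [← add_div, ← sub_div, ← sub_div, abs_div, abs_of_pos hMc]
  gcongr

end Counting

end RobertSargos

theorem stmt5_general (c : ℝ) (hc : 1 < c) (η : ℝ) (hη : 0 < η) :
    ∃ C > 0, ∀ M γ : ℝ, 1 < M → 0 < γ →
      (Set.ncard {q : ℕ × ℕ × ℕ × ℕ |
          (M < (q.1 : ℝ) ∧ (q.1 : ℝ) ≤ 2 * M) ∧
          (M < (q.2.1 : ℝ) ∧ (q.2.1 : ℝ) ≤ 2 * M) ∧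
          (M < (q.2.2.1 : ℝ) ∧ (q.2.2.1 : ℝ) ≤ 2 * M) ∧
          (M < (q.2.2.2 : ℝ) ∧ (q.2.2.2 : ℝ) ≤ 2 * M) ∧
          |(q.1 : ℝ) ^ c + (q.2.1 : ℝ) ^ c - (q.2.2.1 : ℝ) ^ c - (q.2.2.2 : ℝ) ^ c| < γ} : ℝ)
        ≤ C * (γ * M ^ (4 - c) + M ^ 2) * M ^ η := by
  obtain ⟨k, hk⟩ := exists_nat_one_div_lt hη
  obtain ⟨C, hC, henergy⟩ :=
    RobertSargos.powerEnergyBound_two_add_one_div k hc 1 2 one_pos one_lt_two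
  refine ⟨C, hC, fun M γ hM hγ ↦ ?_⟩
  have hM0 : 0 < M := zero_lt_one.trans hM
  have hpow : M ^ (2 + 1 / ((k : ℝ) + 1)) ≤ M ^ 2 * M ^ η := by
    rw [Real.rpow_add hM0, Real.rpow_two]
    gcongr
    exact hM.le
  have hdelta : M ^ 4 * (γ / M ^ c) ≤ γ * M ^ (4 - c) * M ^ η := by
    rw [Real.rpow_sub hM0, show (4 : ℝ) = (4 : ℕ) from rfl, Real.rpow_natCast,
      mul_div_left_comm]
    exact le_mul_of_one_le_right (by positivity) (Real.one_le_rpow hM.le hη.le)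
  calc _ ≤ C * (M ^ (2 + 1 / ((k : ℝ) + 1)) + M ^ 4 * (γ / M ^ c)) :=
        (Nat.cast_le.mpr (RobertSargos.ncard_le_approxEnergy c hM0 γ)).trans
          (henergy M hM0 (γ / M ^ c) (by positivity))
    _ ≤ C * (M ^ 2 * M ^ η + γ * M ^ (4 - c) * M ^ η) := by gcongr
    _ = C * (γ * M ^ (4 - c) + M ^ 2) * M ^ η := by ring

/-- Lemma 2.3, Robert–Sargos: for `M > 1`, non-integer `c > 1`, `γ > 0`,
the number `𝒜(M; c, γ)` of integer quadruples `M < n₁, n₂, n₃, n₄ ≤ 2M` with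
`|n₁^c + n₂^c − n₃^c − n₄^c| < γ` satisfies `𝒜(M; c, γ) ≪_{c,η} (γ M^{4−c} + M²) M^η`. -/
theorem stmt5 (c : ℝ) (hc : 1 < c) (hci : ∀ n : ℤ, c ≠ (n : ℝ))
    (η : ℝ) (hη : 0 < η) :
    ∃ C > 0, ∀ M γ : ℝ, 1 < M → 0 < γ →
      (Set.ncard {q : ℕ × ℕ × ℕ × ℕ |
          (M < (q.1 : ℝ) ∧ (q.1 : ℝ) ≤ 2 * M) ∧
          (M < (q.2.1 : ℝ) ∧ (q.2.1 : ℝ) ≤ 2 * M) ∧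
          (M < (q.2.2.1 : ℝ) ∧ (q.2.2.1 : ℝ) ≤ 2 * M) ∧
          (M < (q.2.2.2 : ℝ) ∧ (q.2.2.2 : ℝ) ≤ 2 * M) ∧
          |(q.1 : ℝ) ^ c + (q.2.1 : ℝ) ^ c - (q.2.2.1 : ℝ) ^ c - (q.2.2.2 : ℝ) ^ c| < γ} : ℝ)
        ≤ C * (γ * M ^ (4 - c) + M ^ 2) * M ^ η :=
  stmt5_general c hc η hη
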